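/- arXiv:2312.15519 — 16 statements merged into one kernel-verified Lean document; each statement's English description precedes it below -/
import Mathlib

section
/- Every sink-free split digraph D admits a quasi-kernel Q with |Q| ≤ (2/3)·|V(D)|. -/
/-!
Let `I = V \ K`, let `K₁` be the set of clique vertices with an out-neighbour in `I`, let
`K₂ = K \ K₁`, and let `J` be the set of vertices of `I` all of whose out-neighbours lie in `K₂`.
Write `n, k₁, k₂, j` for the sizes of `I, K₁, K₂, J`. Choosing one out-neighbour in `I` for each
vertex of `K₁` gives a set `T ⊆ I` with `|T| ≤ k₁`. If `K₂` is empty, `T` is a quasi-kernel of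
size at most `min n k₁`. Otherwise two constructions are compared.

* Some `v ∈ K₂` is a king of `K₂` that is reached within two steps by at least half of `J`
  (`exists_king`). Take `v`, the vertices of `I` that do not reach `v` within two steps, and
  helpers for the clique vertices that do not reach `v`. Those lie in `K₁`, and a helper of one of
  them serves each of its in-neighbours too, so about `k₁ / 2` helpers suffice
  (`exists_half_dominating`). The size is at most `1 + (k₁ + 1) / 2 + n - j / 2`, see
  `exists_quasiKernel_king`.
* If every vertex of `K₂` has an out-neighbour in `K₁`, then `T ∪ J` is a quasi-kernel, of size at
  most `min n (k₁ + j)` (`exists_quasiKernel_sub`). Otherwise, the set `S ⊆ K₂` of vertices without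
  out-neighbour in `K₁` is non-empty, every vertex of `K₁` has an arc to all of `S`, and a king of
  `S` together with the vertices of `J` not reaching it is a quasi-kernel, of size at most `1 + j`
  (`exists_quasiKernel_closed`).

For `k₂ ≥ 2`, averaging the two bounds with weights `2/3` and `1/3` gives the result. For `k₂ = 1`,
no vertex of `J` is lost in the first construction, whose size is then at most
`1 + (k₁ + 1) / 2 + n - j`; the second one is `T ∪ J`, as otherwise the vertex of `K₂` would be a
sink, and its size is also at most `n`, which settles the case `n ≤ 2 |K|`.
-/

/-- A set of vertices is independent: no arc between any two distinct vertices of it. -/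
def Indep {V : Type*} (A : V → V → Prop) (Q : Finset V) : Prop :=
  ∀ u ∈ Q, ∀ v ∈ Q, u ≠ v → ¬ A u v

/-- `Q` is a quasi-kernel of the digraph with arc relation `A`: it is independent and every
vertex has a directed path of length at most 2 to some vertex of `Q`. -/
def QuasiKernel {V : Type*} (A : V → V → Prop) (Q : Finset V) : Prop :=
  Indep A Q ∧
    ∀ v : V, v ∈ Q ∨ (∃ q ∈ Q, A v q) ∨ (∃ w : V, ∃ q ∈ Q, A v w ∧ A w q)

/-- `K` is the clique part of a split digraph with arc relation `A`; the complement of `K`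
is the independent part. -/
def IsSplit {V : Type*} (A : V → V → Prop) (K : Finset V) : Prop :=
  (∀ u ∈ K, ∀ v ∈ K, u ≠ v → A u v ∨ A v u) ∧
    (∀ u, u ∉ K → ∀ v, v ∉ K → u ≠ v → ¬ A u v)

/-! ### Semicomplete digraphs -/

/-- In a set `S` inducing a semicomplete digraph, and for a family `J` of points labelled by
elements of `S`, there is a vertex `v ∈ S` that every vertex of `S` reaches within two steps inside
`S`, and such that at least half of the labels lie in the closed in-neighbourhood of `v`. -/
lemma exists_king {V : Type*} [DecidableEq V] (A : V → V → Prop)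
    (S : Finset V) (hS : S.Nonempty)
    (hsc : ∀ u ∈ S, ∀ v ∈ S, u ≠ v → A u v ∨ A v u) (J : Finset V) (f : V → V)
    (hf : ∀ x ∈ J, f x ∈ S) :
    ∃ v ∈ S, (∀ u ∈ S, u = v ∨ A u v ∨ ∃ x ∈ S, A u x ∧ A x v) ∧
      ∃ C ⊆ J, J.card ≤ 2 * C.card ∧ ∀ x ∈ C, f x = v ∨ A (f x) v := by
  classical
  let N : V → Finset V := fun v => S.filter (fun u => u = v ∨ A u v)
  let c : V → Finset V := fun v => J.filter (fun x => f x = v ∨ A (f x) v)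
  -- Averaging over `J × J`: of two elements of `J`, one has its label dominated by the other's.
  have h0 : ∃ v₀ ∈ S, J.card ≤ 2 * (c v₀).card := by
    rcases J.eq_empty_or_nonempty with rfl | hJ
    · obtain ⟨v, hv⟩ := hS
      exact ⟨v, hv, by simp⟩
    · by_contra! hcon
      have h1 : ∑ x ∈ J, 2 * (c (f x)).card < ∑ x ∈ J, J.card :=
        Finset.sum_lt_sum_of_nonempty hJ (fun x hx => hcon _ (hf x hx))
      let r : V → V → ℕ := fun x y => if f y = f x ∨ A (f y) (f x) then 1 else 0
      have h2 : ∀ x, (c (f x)).card = ∑ y ∈ J, r x y := fun x => by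
        simp only [c, r, Finset.card_filter]
      have h3 : ∑ x ∈ J, 2 * (c (f x)).card = ∑ x ∈ J, ∑ y ∈ J, (r x y + r y x) := by
        have h4 : ∑ x ∈ J, ∑ y ∈ J, r x y = ∑ x ∈ J, ∑ y ∈ J, r y x := Finset.sum_comm
        simp only [Finset.sum_add_distrib, ← h4, ← Finset.mul_sum, h2]
        ring
      have h5 : ∑ x ∈ J, J.card ≤ ∑ x ∈ J, ∑ y ∈ J, (r x y + r y x) := by
        refine Finset.sum_le_sum fun x hx => ?_
        rw [Finset.card_eq_sum_ones]
        refine Finset.sum_le_sum fun y hy => ?_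
        have := hsc (f x) (hf x hx) (f y) (hf y hy)
        simp only [r]
        grind
      omega
  obtain ⟨v₀, hv₀, hc₀⟩ := h0
  -- Enlarging the closed in-neighbourhood of `v₀` as much as possible produces a king.
  obtain ⟨v, hv, hmax⟩ := Finset.exists_max_image (S.filter (fun v => N v₀ ⊆ N v))
    (fun v => (N v).card) ⟨v₀, by simp [hv₀]⟩
  rw [Finset.mem_filter] at hv
  refine ⟨v, hv.1, ?_, c v, Finset.filter_subset _ _, ?_, ?_⟩
  · intro u hu
    by_contra! hcon
    obtain ⟨hne, hnA, hno⟩ := hcon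
    have hsub : N v ⊆ N u := by
      intro x hx
      have hx' : x ∈ S ∧ (x = v ∨ A x v) := by simpa [N] using hx
      have := hsc x hx'.1 u hu
      have := hno x hx'.1
      simp only [N, Finset.mem_filter]
      grind
    have hss : N v ⊂ N u := by
      refine (Finset.ssubset_iff_of_subset hsub).2 ⟨u, ?_, ?_⟩
      · simp [N, hu]
      · simp [N, hne, hnA]
    have := hmax u (by simp only [Finset.mem_filter]; exact ⟨hu, hv.2.trans hsub⟩)
    have := Finset.card_lt_card hss
    omega
  · have : c v₀ ⊆ c v := by
      intro x hx
      have hx' : x ∈ J ∧ (f x = v₀ ∨ A (f x) v₀) := by simpa [c] using hx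
      have hm : f x ∈ N v := hv.2 (by simp only [N, Finset.mem_filter]; exact ⟨hf x hx'.1, hx'.2⟩)
      simp only [N, Finset.mem_filter] at hm
      simp only [c, Finset.mem_filter]
      exact ⟨hx'.1, hm.2⟩
    have := Finset.card_le_card this
    omega
  · intro x hx
    exact (Finset.mem_filter.1 hx).2

/-- Pairing up the vertices of a semicomplete digraph and keeping a dominated one in each pair
gives a set of about half of the vertices that is absorbing in one step. -/
lemma exists_half_dominating {V : Type*} [DecidableEq V] (A : V → V → Prop) (m : ℕ) :
    ∀ S : Finset V, S.card ≤ m → (∀ u ∈ S, ∀ v ∈ S, u ≠ v → A u v ∨ A v u) →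
    ∃ H ⊆ S, 2 * H.card ≤ S.card + 1 ∧ ∀ z ∈ S, ∃ h ∈ H, z = h ∨ A z h := by
  induction m using Nat.strong_induction_on with
  | _ m ih =>
    intro S hm hsc
    by_cases h1 : S.card ≤ 1
    · exact ⟨S, subset_rfl, by omega, fun z hz => ⟨z, hz, Or.inl rfl⟩⟩
    · obtain ⟨a, ha, b, hb, hab⟩ := Finset.one_lt_card.1 (not_le.1 h1)
      wlog hA : A a b generalizing a b
      · exact this b hb a ha hab.symm ((hsc a ha b hb hab).resolve_left hA)
      have hcard : ((S.erase a).erase b).card + 2 = S.card := by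
        rw [Finset.card_erase_of_mem (by simp [hb, hab.symm]), Finset.card_erase_of_mem ha]
        omega
      obtain ⟨H, hH, hHc, hHd⟩ := ih (m - 2) (by omega) ((S.erase a).erase b) (by omega)
        (fun u hu v hv => hsc u (by simp at hu; tauto) v (by simp at hv; tauto))
      refine ⟨insert b H, ?_, ?_, ?_⟩
      · intro x hx
        rcases Finset.mem_insert.1 hx with rfl | hx
        · exact hb
        · have := hH hx
          simp at this; tauto
      · have := Finset.card_insert_le b H
        omega
      · intro z hz
        by_cases hzb : z = b
        · exact ⟨b, by simp, Or.inl hzb⟩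
        by_cases hza : z = a
        · exact ⟨b, by simp, Or.inr (hza ▸ hA)⟩
        obtain ⟨h, hh, hd⟩ := hHd z (by simp [hz, hzb, hza])
        exact ⟨h, by simp [hh], hd⟩

/-! ### Quasi-kernels of split digraphs -/

section Split

variable {V : Type*} (A : V → V → Prop) (K K₁ K₂ J : Finset V)

/-- The decomposition of a split digraph used throughout: `K₁` consists of the clique vertices with
an out-neighbour outside `K`, `K₂` of the other clique vertices, and `J` of the vertices outside `K`
all of whose out-neighbours lie in `K₂`. -/
structure Decomp : Prop where
  split : IsSplit A K
  irrefl : ∀ v, ¬ A v v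
  out : ∀ v, ∃ w, A v w
  mem₁ : ∀ v, v ∈ K₁ ↔ v ∈ K ∧ ∃ u, u ∉ K ∧ A v u
  mem₂ : ∀ v, v ∈ K₂ ↔ v ∈ K ∧ v ∉ K₁
  memJ : ∀ x, x ∈ J ↔ x ∉ K ∧ ∀ w, A x w → w ∈ K₂

variable {A K K₁ K₂ J}

lemma Decomp.out_mem (h : Decomp A K K₁ K₂ J) {x w : V} (hx : x ∉ K) (hw : A x w) : w ∈ K := by
  by_contra hwK
  exact h.split.2 x hx w hwK (fun e => h.irrefl x (by rw [← e] at hw; exact hw)) hw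

variable [DecidableEq V]

/-- A vertex of `K₂` and the vertices outside `K` that have no arc to it form an independent set. -/
lemma Decomp.indep_insert (h : Decomp A K K₁ K₂ J) {v : V} (hv : v ∈ K₂) {W : Finset V}
    (hW : ∀ x ∈ W, x ∉ K ∧ ¬ A x v) : Indep A (insert v W) := by
  have hvK := (h.mem₂ v).1 hv
  have hno : ∀ x, x ∉ K → ¬ A v x := fun x hx hA => hvK.2 ((h.mem₁ v).2 ⟨hvK.1, x, hx, hA⟩)
  intro a ha b hb hab
  rcases Finset.mem_insert.1 ha with rfl | ha'
  · rcases Finset.mem_insert.1 hb with rfl | hb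
    · exact absurd rfl hab
    · exact hno b (hW b hb).1
  · rcases Finset.mem_insert.1 hb with rfl | hb
    · exact (hW a ha').2
    · exact h.split.2 a (hW a ha').1 b (hW b hb).1 hab

variable [Fintype V]

/-- The quasi-kernel built on a king `v` of `K₂`. The number `c` counts vertices of `J` that
reach `v` within two steps, and `p` counts the clique vertices that receive a helper. -/
lemma Decomp.exists_quasiKernel_king (h : Decomp A K K₁ K₂ J) (hne : K₂.Nonempty) :
    ∃ Q : Finset V, QuasiKernel A Q ∧ ∃ c p : ℕ, J.card ≤ 2 * c ∧ (K₂.card = 1 → J.card ≤ c) ∧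
      2 * p ≤ K₁.card + 1 ∧ Q.card + c ≤ 1 + p + Kᶜ.card := by
  classical
  choose f hf using h.out
  have hfJ : ∀ x ∈ J, f x ∈ K₂ := fun x hx => ((h.memJ x).1 hx).2 _ (hf x)
  obtain ⟨v, hv, hking, C, hCJ, hCc, hC⟩ := exists_king A K₂ hne
    (fun u hu w hw => h.split.1 u ((h.mem₂ u).1 hu).1 w ((h.mem₂ w).1 hw).1) J f hfJ
  have hCK : ∀ x ∈ C, x ∉ K := fun x hx => ((h.memJ x).1 (hCJ hx)).1
  let D : Finset V := if K₂.card = 1 then J else C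
  have hDJ : D ⊆ J := by simp only [D]; split_ifs; exacts [subset_rfl, hCJ]
  have hCD : C ⊆ D := by simp only [D]; split_ifs; exacts [hCJ, subset_rfl]
  have hD : ∀ x ∈ D, f x = v ∨ A (f x) v := by
    intro x hx
    by_cases hk : K₂.card = 1
    · obtain ⟨a, rfl⟩ := Finset.card_eq_one.1 hk
      have h1 := hfJ x (hDJ hx)
      rw [Finset.mem_singleton] at h1 hv
      exact Or.inl (h1.trans hv.symm)
    · exact hC x (by simpa [D, hk] using hx)
  let U := Kᶜ.filter (fun x => ¬ A x v ∧ ¬ ∃ w, A x w ∧ A w v)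
  let Z := K.filter (fun z => z ≠ v ∧ ¬ A z v ∧ ¬ ∃ w, A z w ∧ A w v)
  have hZ₁ : Z ⊆ K₁ := by
    intro z hz
    obtain ⟨hzK, hzv, hzA, hzw⟩ := Finset.mem_filter.1 hz
    by_contra hz₁
    rcases hking z ((h.mem₂ z).2 ⟨hzK, hz₁⟩) with e | e | ⟨x, -, e⟩
    · exact hzv e
    · exact hzA e
    · exact hzw ⟨x, e⟩
  have hex : ∀ z, ∃ u, z ∈ K₁ → u ∉ K ∧ A z u := by
    intro z
    by_cases hz : z ∈ K₁
    · obtain ⟨u, hu⟩ := ((h.mem₁ z).1 hz).2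
      exact ⟨u, fun _ => hu⟩
    · exact ⟨z, fun hz' => absurd hz' hz⟩
  choose g hg using hex
  obtain ⟨H, hHZ, hHc, hH⟩ := exists_half_dominating A Z.card Z le_rfl
    (fun u hu w hw => h.split.1 u (Finset.mem_filter.1 hu).1 w (Finset.mem_filter.1 hw).1)
  refine ⟨insert v (U ∪ H.image g), ⟨h.indep_insert hv ?_, ?_⟩, D.card, H.card, ?_, ?_, ?_, ?_⟩
  · intro x hx
    rcases Finset.mem_union.1 hx with hx | hx
    · obtain ⟨h1, h2, -⟩ := Finset.mem_filter.1 hx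
      exact ⟨by simpa using h1, h2⟩
    · obtain ⟨z, hz, rfl⟩ := Finset.mem_image.1 hx
      have h1 := hg z (hZ₁ (hHZ hz))
      -- An arc from the helper of `z` to `v` would give a path of length two from `z` to `v`.
      exact ⟨h1.1, fun hA => (Finset.mem_filter.1 (hHZ hz)).2.2.2 ⟨_, h1.2, hA⟩⟩
  · intro x
    by_cases hxv : x = v
    · exact Or.inl (by simp [hxv])
    by_cases hxA : A x v
    · exact Or.inr (Or.inl ⟨v, by simp, hxA⟩)
    by_cases hxw : ∃ w, A x w ∧ A w v
    · obtain ⟨w, hw⟩ := hxw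
      exact Or.inr (Or.inr ⟨w, v, by simp, hw⟩)
    by_cases hxK : x ∈ K
    · obtain ⟨z, hz, hd⟩ := hH x (Finset.mem_filter.2 ⟨hxK, hxv, hxA, hxw⟩)
      have h1 := hg z (hZ₁ (hHZ hz))
      have h2 : g z ∈ insert v (U ∪ H.image g) :=
        Finset.mem_insert_of_mem (Finset.mem_union_right _ (Finset.mem_image_of_mem g hz))
      rcases hd with rfl | hd
      · exact Or.inr (Or.inl ⟨_, h2, h1.2⟩)
      · exact Or.inr (Or.inr ⟨z, _, h2, hd, h1.2⟩)
    · exact Or.inl (Finset.mem_insert_of_mem (Finset.mem_union_left _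
        (Finset.mem_filter.2 ⟨by simpa using hxK, hxA, hxw⟩)))
  · have := Finset.card_le_card hCD
    omega
  · intro hk
    simp [D, hk]
  · have := Finset.card_le_card hZ₁
    omega
  · have hdisj : Disjoint U D := by
      rw [Finset.disjoint_left]
      intro x hx hxD
      obtain ⟨-, h1, h2⟩ := Finset.mem_filter.1 hx
      rcases hD x hxD with e | e
      · exact h1 (e ▸ hf x)
      · exact h2 ⟨_, hf x, e⟩
    have hsub : U ∪ D ⊆ Kᶜ := by
      refine Finset.union_subset (Finset.filter_subset _ _) fun x hx => ?_
      simpa using ((h.memJ x).1 (hDJ hx)).1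
    have h1 := Finset.card_le_card hsub
    rw [Finset.card_union_of_disjoint hdisj] at h1
    have h2 := Finset.card_insert_le v (U ∪ H.image g)
    have h3 := Finset.card_union_le U (H.image g)
    have h4 := Finset.card_image_le (s := H) (f := g)
    omega

/-- When every vertex of `K₂` has an out-neighbour in `K₁`, one out-neighbour outside `K` for each
vertex of `K₁`, together with `J`, forms a quasi-kernel. -/
lemma Decomp.exists_quasiKernel_sub (h : Decomp A K K₁ K₂ J)
    (hout : ∀ y ∈ K₂, ∃ z ∈ K₁, A y z) :
    ∃ Q : Finset V, QuasiKernel A Q ∧ Q.card ≤ Kᶜ.card ∧ Q.card ≤ K₁.card + J.card := by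
  classical
  have hex : ∀ z, ∃ u, z ∈ K₁ → u ∉ K ∧ A z u := by
    intro z
    by_cases hz : z ∈ K₁
    · obtain ⟨u, hu⟩ := ((h.mem₁ z).1 hz).2
      exact ⟨u, fun _ => hu⟩
    · exact ⟨z, fun hz' => absurd hz' hz⟩
  choose g hg using hex
  have hQ : ∀ x ∈ K₁.image g ∪ J, x ∉ K := by
    intro x hx
    rcases Finset.mem_union.1 hx with hx | hx
    · obtain ⟨z, hz, rfl⟩ := Finset.mem_image.1 hx
      exact (hg z hz).1
    · exact ((h.memJ x).1 hx).1
  have hgQ : ∀ z ∈ K₁, g z ∈ K₁.image g ∪ J := fun z hz =>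
    Finset.mem_union_left _ (Finset.mem_image_of_mem g hz)
  refine ⟨K₁.image g ∪ J, ⟨fun a ha b hb => h.split.2 a (hQ a ha) b (hQ b hb), ?_⟩, ?_, ?_⟩
  · intro x
    by_cases hxK : x ∈ K
    · by_cases hx₁ : x ∈ K₁
      · exact Or.inr (Or.inl ⟨_, hgQ x hx₁, (hg x hx₁).2⟩)
      · obtain ⟨z, hz, hA⟩ := hout x ((h.mem₂ x).2 ⟨hxK, hx₁⟩)
        exact Or.inr (Or.inr ⟨z, _, hgQ z hz, hA, (hg z hz).2⟩)
    · by_cases hxJ : x ∈ J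
      · exact Or.inl (Finset.mem_union_right _ hxJ)
      · obtain ⟨w, hA, hw⟩ : ∃ w, A x w ∧ w ∉ K₂ := by
          by_contra! hcon
          exact hxJ ((h.memJ x).2 ⟨hxK, hcon⟩)
        have hw₁ : w ∈ K₁ := by
          by_contra hw₁
          exact hw ((h.mem₂ w).2 ⟨h.out_mem hxK hA, hw₁⟩)
        exact Or.inr (Or.inr ⟨w, _, hgQ w hw₁, hA, (hg w hw₁).2⟩)
  · exact Finset.card_le_card fun x hx => by simpa using hQ x hx
  · exact (Finset.card_union_le _ _).trans (Nat.add_le_add_right Finset.card_image_le _)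

/-- When some vertex `y` of `K₂` has no out-neighbour in `K₁`, a king of the set of all such
vertices is reached by everything outside `J`; moreover `K₂` has a second vertex, as `y` is not a
sink. -/
lemma Decomp.exists_quasiKernel_closed (h : Decomp A K K₁ K₂ J) {y : V} (hy : y ∈ K₂)
    (hyo : ∀ z ∈ K₁, ¬ A y z) :
    2 ≤ K₂.card ∧ ∃ Q : Finset V, QuasiKernel A Q ∧ Q.card ≤ 1 + J.card := by
  classical
  constructor
  · obtain ⟨w, hw⟩ := h.out y
    have hyK := (h.mem₂ y).1 hy
    have hwK : w ∈ K := by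
      by_contra hwK
      exact hyK.2 ((h.mem₁ y).2 ⟨hyK.1, w, hwK, hw⟩)
    have hw₂ : w ∈ K₂ := (h.mem₂ w).2 ⟨hwK, fun hw₁ => hyo w hw₁ hw⟩
    exact Finset.one_lt_card.2 ⟨y, hy, w, hw₂, fun e => h.irrefl y (by rw [← e] at hw; exact hw)⟩
  · let S := K₂.filter (fun y => ∀ z ∈ K₁, ¬ A y z)
    obtain ⟨v, hvS, hking, -⟩ := exists_king A S ⟨y, Finset.mem_filter.2 ⟨hy, hyo⟩⟩
      (fun u hu w hw => h.split.1 u ((h.mem₂ u).1 (Finset.mem_filter.1 hu).1).1 w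
        ((h.mem₂ w).1 (Finset.mem_filter.1 hw).1).1) ∅ id (by simp)
    obtain ⟨hv, hvo⟩ := Finset.mem_filter.1 hvS
    have hvK := (h.mem₂ v).1 hv
    have h₁v : ∀ z ∈ K₁, A z v := fun z hz =>
      (h.split.1 z ((h.mem₁ z).1 hz).1 v hvK.1 (fun e => hvK.2 (e ▸ hz))).resolve_right (hvo z hz)
    refine ⟨insert v (J.filter (fun x => ¬ A x v)), ⟨h.indep_insert hv ?_, ?_⟩, ?_⟩
    · intro x hx
      obtain ⟨h1, h2⟩ := Finset.mem_filter.1 hx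
      exact ⟨((h.memJ x).1 h1).1, h2⟩
    · intro x
      by_cases hxA : A x v
      · exact Or.inr (Or.inl ⟨v, by simp, hxA⟩)
      by_cases hxw : ∃ w ∈ K₁, A x w
      · obtain ⟨w, hw, hA⟩ := hxw
        exact Or.inr (Or.inr ⟨w, v, by simp, hA, h₁v w hw⟩)
      push Not at hxw
      by_cases hxK : x ∈ K
      · have hx₂ : x ∈ K₂ := (h.mem₂ x).2 ⟨hxK, fun hx₁ => hxA (h₁v x hx₁)⟩
        rcases hking x (Finset.mem_filter.2 ⟨hx₂, hxw⟩) with e | e | ⟨w, -, e⟩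
        · exact Or.inl (by simp [e])
        · exact absurd e hxA
        · exact Or.inr (Or.inr ⟨w, v, by simp, e⟩)
      · refine Or.inl (Finset.mem_insert_of_mem (Finset.mem_filter.2 ⟨?_, hxA⟩))
        exact (h.memJ x).2 ⟨hxK, fun w hw =>
          (h.mem₂ w).2 ⟨h.out_mem hxK hw, fun hw₁ => hxw w hw₁ hw⟩⟩
    · have h1 := Finset.card_insert_le v (J.filter (fun x => ¬ A x v))
      have h2 := Finset.card_filter_le J (fun x => ¬ A x v)
      omega

end Split

/-! ### The two-thirds bound -/

/-- Every sink-free split digraph admits a quasi-kernel of size at most 2/3 of the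
number of vertices. -/
theorem stmt0 {V : Type*} [Fintype V] [DecidableEq V] (A : V → V → Prop)
    (hirr : Irreflexive A) (K : Finset V) (hsplit : IsSplit A K)
    (hsinkfree : ∀ v : V, ∃ w : V, A v w) :
    ∃ Q : Finset V, QuasiKernel A Q ∧ (Q.card : ℝ) ≤ (2 / 3) * Fintype.card V := by
  classical
  suffices hnat : ∃ Q : Finset V, QuasiKernel A Q ∧ 3 * Q.card ≤ 2 * Fintype.card V by
    obtain ⟨Q, hQ, hc⟩ := hnat
    refine ⟨Q, hQ, ?_⟩
    have : (3 : ℝ) * Q.card ≤ 2 * Fintype.card V := by exact_mod_cast hc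
    linarith
  obtain ⟨K₁, hK₁⟩ : ∃ K₁ : Finset V, ∀ v, v ∈ K₁ ↔ v ∈ K ∧ ∃ u, u ∉ K ∧ A v u :=
    ⟨K.filter (fun v => ∃ u, u ∉ K ∧ A v u), by simp⟩
  obtain ⟨K₂, hK₂, hcard⟩ : ∃ K₂ : Finset V, (∀ v, v ∈ K₂ ↔ v ∈ K ∧ v ∉ K₁) ∧
      K₁.card + K₂.card = K.card := by
    have hsub : K₁ ⊆ K := fun v hv => ((hK₁ v).1 hv).1
    refine ⟨K \ K₁, by simp, ?_⟩
    have := Finset.card_sdiff_add_card_eq_card hsub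
    omega
  obtain ⟨J, hJ⟩ : ∃ J : Finset V, ∀ x, x ∈ J ↔ x ∉ K ∧ ∀ w, A x w → w ∈ K₂ :=
    ⟨Kᶜ.filter (fun x => ∀ w, A x w → w ∈ K₂), by simp⟩
  have h : Decomp A K K₁ K₂ J := ⟨hsplit, fun v => hirr v, hsinkfree, hK₁, hK₂, hJ⟩
  have hV : K.card + Kᶜ.card = Fintype.card V := Finset.card_add_card_compl K
  -- All constructed quasi-kernels are too large; linear arithmetic refutes this in each case.
  by_contra! hcon
  rcases K₂.eq_empty_or_nonempty with he | hne
  · obtain ⟨Q, hQ, h1, h2⟩ := h.exists_quasiKernel_sub (by simp [he])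
    have hJ0 : J = ∅ := by
      refine Finset.eq_empty_of_forall_notMem fun x hx => ?_
      obtain ⟨w, hw⟩ := hsinkfree x
      have := ((hJ x).1 hx).2 w hw
      simp [he] at this
    have := hcon Q hQ
    simp only [he, hJ0, Finset.card_empty] at *
    omega
  · have hpos := hne.card_pos
    obtain ⟨Q, hQ, c, p, h1, h2, h3, h4⟩ := h.exists_quasiKernel_king hne
    have h5 := hcon Q hQ
    by_cases hout : ∀ y ∈ K₂, ∃ z ∈ K₁, A y z
    · obtain ⟨Q', hQ', h6, h7⟩ := h.exists_quasiKernel_sub hout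
      have h8 := hcon Q' hQ'
      by_cases hk : K₂.card = 1
      · have := h2 hk
        omega
      · omega
    · push Not at hout
      obtain ⟨y, hy, hyo⟩ := hout
      obtain ⟨h6, Q', hQ', h7⟩ := h.exists_quasiKernel_closed hy hyo
      have h8 := hcon Q' hQ'
      omega
end

section
/- Let D be a biorientation of a complete split graph that has at least one sink. Then the set S(D) of all sinks of D is a quasi-kernel of D, and it is the unique quasi-kernel of D of minimum size: every quasi-kernel Q of D satisfies |Q| ≥ |S(D)|, and |Q| = |S(D)| implies Q = S(D). -/
/-- A biorientation of a complete split graph: a split digraph in which between every vertex of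
the independent part and every vertex of the clique part there is at least one arc. -/
def IsCompleteSplit {V : Type*} (A : V → V → Prop) (K : Finset V) : Prop :=
  IsSplit A K ∧ ∀ s, s ∉ K → ∀ k ∈ K, A s k ∨ A k s

/-!
A sink has no outneighbor, so it reaches a set within two steps only by belonging to it: every
quasi-kernel contains all sinks (`sinks_subset`), which gives both minimality and uniqueness.
Conversely, fix a sink `s`. Every arc between `s` and another vertex points towards `s`. If `s` lies
in the clique part, all other vertices are adjacent to `s`, hence dominate it. If `s` lies in the
independent part, every clique vertex dominates `s`, and a non-sink of the independent part has an
outneighbor, necessarily in the clique part, so it reaches `s` in two steps.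
-/

theorem sinks_subset {V : Type*} [Fintype V] [DecidableEq V] (A : V → V → Prop) [DecidableRel A]
    {Q : Finset V} (hQ : QuasiKernel A Q) :
    Finset.univ.filter (fun v : V => ∀ w : V, ¬ A v w) ⊆ Q := by
  intro v hv
  have hv' : ∀ w : V, ¬ A v w := by simpa using hv
  rcases hQ.2 v with h | ⟨q, _, h⟩ | ⟨w, q, _, h, _⟩
  · exact h
  · exact absurd h (hv' q)
  · exact absurd h (hv' w)

/-- If a biorientation of a complete split graph has a sink, then the set of all its sinks is a
quasi-kernel, and it is the unique quasi-kernel of minimum size. -/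
theorem stmt1 {V : Type*} [Fintype V] [DecidableEq V] (A : V → V → Prop) [DecidableRel A]
    (hirr : Irreflexive A) (K : Finset V) (hcs : IsCompleteSplit A K)
    (hsink : ∃ v : V, ∀ w : V, ¬ A v w) :
    QuasiKernel A (Finset.univ.filter (fun v : V => ∀ w : V, ¬ A v w)) ∧
      ∀ Q : Finset V, QuasiKernel A Q →
        (Finset.univ.filter (fun v : V => ∀ w : V, ¬ A v w)).card ≤ Q.card ∧
          (Q.card = (Finset.univ.filter (fun v : V => ∀ w : V, ¬ A v w)).card →
            Q = Finset.univ.filter (fun v : V => ∀ w : V, ¬ A v w)) := by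
  refine ⟨⟨?_, ?_⟩, fun Q hQ => ?_⟩
  · intro u hu v _ _
    exact (Finset.mem_filter.1 hu).2 v
  · obtain ⟨s, hs⟩ := hsink
    obtain ⟨⟨hK, hI⟩, hKI⟩ := hcs
    have hsS : s ∈ Finset.univ.filter (fun v : V => ∀ w : V, ¬ A v w) := by simpa using hs
    intro v
    by_cases hv : ∀ w, ¬ A v w
    · exact Or.inl (by simpa using hv)
    have hne : v ≠ s := fun h => hv (h ▸ hs)
    right
    by_cases hsK : s ∈ K
    · refine Or.inl ⟨s, hsS, ?_⟩
      by_cases hvK : v ∈ K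
      · exact (hK v hvK s hsK hne).resolve_right (hs v)
      · exact (hKI v hvK s hsK).resolve_right (hs v)
    · by_cases hvK : v ∈ K
      · exact Or.inl ⟨s, hsS, (hKI s hsK v hvK).resolve_left (hs v)⟩
      · push Not at hv
        obtain ⟨w, hw⟩ := hv
        have hvw : v ≠ w := by
          rintro rfl
          exact hirr v hw
        have hwK : w ∈ K := by
          by_contra h
          exact hI v hvK w h hvw hw
        exact Or.inr ⟨w, s, hsS, hw, (hKI s hsK w hwK).resolve_left (hs w)⟩
  · have hsub := sinks_subset A hQ
    exact ⟨Finset.card_le_card hsub, fun h => (Finset.eq_of_subset_of_card_le hsub h.le).symm⟩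
end

section
/- Every sink-free biorientation of a complete split graph with at least one vertex admits a quasi-kernel of size at most two. -/
/-- A nonempty semicomplete digraph has a vertex that every vertex reaches in at most two steps:
any vertex `p` of maximum in-degree will do, since a vertex `x` not reaching `p` would have `p` and
all in-neighbours of `p` among its own in-neighbours. -/
lemma exists_reached_in_two {V : Type*} (A : V → V → Prop) (hirr : Irreflexive A) (P : Finset V)
    (hP : P.Nonempty) (hsemi : ∀ u ∈ P, ∀ v ∈ P, u ≠ v → A u v ∨ A v u) :
    ∃ p ∈ P, ∀ x ∈ P, x = p ∨ A x p ∨ ∃ y ∈ P, A x y ∧ A y p := by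
  classical
  obtain ⟨p, hp, hmax⟩ := P.exists_max_image (fun p => (P.filter (fun y => A y p)).card) hP
  refine ⟨p, hp, fun x hx => ?_⟩
  by_contra! hcon
  obtain ⟨hxp, hnxp, hny⟩ := hcon
  refine absurd (hmax x hx) (not_le.mpr (Finset.card_lt_card ?_))
  rw [Finset.ssubset_iff_of_subset]
  · refine ⟨p, ?_, ?_⟩
    · simpa [hp] using (hsemi x hx p hp hxp).resolve_left hnxp
    · simpa [hp] using hirr p
  · intro y hy
    simp only [Finset.mem_filter] at hy ⊢
    have hxy : x ≠ y := by
      rintro rfl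
      exact hnxp hy.2
    exact ⟨hy.1, (hsemi x hx y hy.1 hxy).resolve_left fun h => hny y hy.1 h hy.2⟩

/-- Every sink-free biorientation of a complete split graph with at least one vertex admits a
quasi-kernel of size at most two. -/
theorem stmt2 {V : Type*} [Fintype V] [DecidableEq V] [Nonempty V] (A : V → V → Prop)
    (hirr : Irreflexive A) (K : Finset V) (hcs : IsCompleteSplit A K)
    (hsinkfree : ∀ v : V, ∃ w : V, A v w) :
    ∃ Q : Finset V, QuasiKernel A Q ∧ Q.card ≤ 2 := by
  classical
  obtain ⟨⟨hK, hI⟩, hKI⟩ := hcs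
  have hIK : ∀ s, s ∉ K → ∀ w, A s w → w ∈ K := by
    intro s hs w hw
    by_contra hwK
    exact hI s hs w hwK (fun h => hirr s (h ▸ hw)) hw
  by_cases hne : (Finset.univ.filter (fun v => v ∉ K)).Nonempty
  swap
  · have hall : ∀ v, v ∈ K := by
      intro v
      by_contra hv
      exact hne ⟨v, by simpa using hv⟩
    obtain ⟨v⟩ := ‹Nonempty V›
    obtain ⟨p, -, hp⟩ := exists_reached_in_two A hirr K ⟨v, hall v⟩ hK
    refine ⟨{p}, ⟨by simp [Indep], fun x => ?_⟩, by simp⟩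
    rcases hp x (hall x) with h | h | ⟨y, -, h⟩
    · exact Or.inl (by simp [h])
    · exact Or.inr (Or.inl ⟨p, by simp, h⟩)
    · exact Or.inr (Or.inr ⟨y, p, by simp, h⟩)
  obtain ⟨u, hu, hmin⟩ :=
    Finset.exists_min_image _ (fun s => (Finset.univ.filter (fun w => A s w)).card) hne
  replace hu : u ∉ K := by simpa using hu
  replace hmin : ∀ s, s ∉ K → (∀ w, A s w → A u w) → ∀ w, A u w → A s w := by
    intro s hs hsub w hw
    have heq := Finset.eq_of_subset_of_card_le
      (show Finset.univ.filter (fun w => A s w) ⊆ Finset.univ.filter (fun w => A u w) from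
        fun w hw => by simpa using hsub w (by simpa using hw))
      (hmin s (by simpa using hs))
    have : w ∈ Finset.univ.filter (fun w => A s w) := by
      rw [heq]
      simpa using hw
    simpa using this
  obtain ⟨p, hpP, hp⟩ := exists_reached_in_two A hirr (Finset.univ.filter (fun w => A u w))
    (by obtain ⟨w, hw⟩ := hsinkfree u; exact ⟨w, by simpa using hw⟩)
    (fun a ha b hb => hK a (hIK u hu a (by simpa using ha)) b (hIK u hu b (by simpa using hb)))
  simp only [Finset.mem_filter, Finset.mem_univ, true_and] at hpP hp
  by_cases hbad : ∃ t, t ∉ K ∧ ¬ A t p ∧ ∀ w, A t w → ¬ A w p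
  · obtain ⟨t, ht, htp, htw⟩ := hbad
    have hpt : A p t := (hKI t ht p (hIK u hu p hpP)).resolve_left htp
    refine ⟨{u, t}, ⟨?_, fun x => ?_⟩, Finset.card_le_two⟩
    · intro a ha b hb
      have hout : ∀ c ∈ ({u, t} : Finset V), c ∉ K := by simp [hu, ht]
      exact hI a (hout a ha) b (hout b hb)
    by_cases hx : x ∈ K
    · by_cases hux : A u x
      · rcases hp x hux with rfl | h | ⟨y, hy, hxy, hyp⟩
        · exact Or.inr (Or.inl ⟨t, by simp, hpt⟩)
        · exact Or.inr (Or.inl ⟨t, by simp, (hKI t ht x hx).resolve_left fun h' => htw x h' h⟩)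
        · exact Or.inr (Or.inr ⟨y, t, by simp, hxy,
            (hKI t ht y (hIK u hu y hy)).resolve_left fun h' => htw y h' hyp⟩)
      · exact Or.inr (Or.inl ⟨u, by simp, (hKI u hu x hx).resolve_left hux⟩)
    · by_cases hxu : ∃ w, A x w ∧ A w u
      · obtain ⟨w, hw⟩ := hxu
        exact Or.inr (Or.inr ⟨w, u, by simp, hw⟩)
      · push Not at hxu
        have hxp : A x p := hmin x hx
          (fun w hw => (hKI u hu w (hIK x hx w hw)).resolve_right (hxu w hw)) p hpP
        exact Or.inr (Or.inr ⟨p, t, by simp, hxp, hpt⟩)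
  · push Not at hbad
    refine ⟨{p}, ⟨by simp [Indep], fun x => ?_⟩, by simp⟩
    by_cases hx : x ∈ K
    · by_cases hux : A u x
      · rcases hp x hux with h | h | ⟨y, -, h⟩
        · exact Or.inl (by simp [h])
        · exact Or.inr (Or.inl ⟨p, by simp, h⟩)
        · exact Or.inr (Or.inr ⟨y, p, by simp, h⟩)
      · exact Or.inr (Or.inr ⟨u, p, by simp, (hKI u hu x hx).resolve_left hux, hpP⟩)
    · by_cases hxp : A x p
      · exact Or.inr (Or.inl ⟨p, by simp, hxp⟩)
      · obtain ⟨w, hw⟩ := hbad x hx hxp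
        exact Or.inr (Or.inr ⟨w, p, by simp, hw⟩)
end

section
/- Let T be a semicomplete digraph and let v be a vertex of T that is not a 2-serf of T. Then there exists a 2-serf u of T such that N⁻[v] ⊆ N⁻(u), where N⁻(u) is the set of inneighbors of u and N⁻[v] = N⁻(v) ∪ {v}. -/
/-- A 2-serf is a vertex forming a quasi-kernel of size one. -/
def TwoSerf {V : Type*} [DecidableEq V] (A : V → V → Prop) (v : V) : Prop :=
  QuasiKernel A {v}

lemma twoSerf_of_forall {V : Type*} [DecidableEq V] {A : V → V → Prop} {v : V}
    (h : ∀ x : V, x = v ∨ A x v ∨ ∃ w, A x w ∧ A w v) : TwoSerf A v := by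
  refine ⟨fun a ha b hb hab => ?_, fun x => ?_⟩
  · rw [Finset.mem_singleton] at ha hb
    exact absurd (ha.trans hb.symm) hab
  · rcases h x with h | h | ⟨w, h₁, h₂⟩
    · exact Or.inl (Finset.mem_singleton.2 h)
    · exact Or.inr (Or.inl ⟨v, Finset.mem_singleton_self v, h⟩)
    · exact Or.inr (Or.inr ⟨w, v, Finset.mem_singleton_self v, h₁, h₂⟩)

lemma exists_dominating_of_not_twoSerf {V : Type*} [DecidableEq V] {A : V → V → Prop}
    (hsemi : ∀ u v : V, u ≠ v → A u v ∨ A v u) {v : V} (hv : ¬ TwoSerf A v) :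
    ∃ x : V, ∀ w : V, (w = v ∨ A w v) → A w x := by
  obtain ⟨x, hx⟩ := not_forall.1 (mt twoSerf_of_forall hv)
  simp only [not_or, not_exists, not_and] at hx
  obtain ⟨hne, hnadj, hnpath⟩ := hx
  refine ⟨x, ?_⟩
  rintro w (rfl | hw)
  · exact (hsemi x w hne).resolve_left hnadj
  · have hxw : x ≠ w := by
      rintro rfl
      exact hnadj hw
    exact (hsemi x w hxw).resolve_left fun h => hnpath w h hw

/-- If `v` is not a 2-serf of a semicomplete digraph `T`, then there is a 2-serf `u` of `T`
with `N⁻[v] ⊆ N⁻(u)`. -/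
theorem stmt3 {V : Type*} [Fintype V] [DecidableEq V] (A : V → V → Prop)
    (hirr : Irreflexive A) (hsemi : ∀ u v : V, u ≠ v → A u v ∨ A v u)
    (v : V) (hv : ¬ TwoSerf A v) :
    ∃ u : V, TwoSerf A u ∧ ∀ w : V, (w = v ∨ A w v) → A w u := by
  -- Well-founded induction on the inneighborhood of `v`, ordered by reverse inclusion.
  induction hS : {w | A w v} using (wellFounded_gt (α := Set V)).induction generalizing v with
  | _ S ih =>
    subst hS
    obtain ⟨x, hx⟩ := exists_dominating_of_not_twoSerf hsemi hv
    by_cases hserf : TwoSerf A x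
    · exact ⟨x, hserf, hx⟩
    · have hlt : {w | A w v} < {w | A w x} :=
        ⟨fun w hw => hx w (Or.inr hw), fun h => hirr v (h (hx v (Or.inl rfl)))⟩
      obtain ⟨u, hu, hxu⟩ := ih {w | A w x} hlt x hserf rfl
      exact ⟨u, hu, fun w hw => hxu w (Or.inr (hx w hw))⟩
end

section
/- Every sink-free one-way split digraph D admits a quasi-kernel Q with |Q| ≤ (|V(D)| + 3)/2 − √|V(D)| (an inequality of real numbers). -/
/-- A one-way split digraph: a split digraph in which every vertex of the independent part is a
source (has no inneighbor). -/
def IsOneWaySplit {V : Type*} (A : V → V → Prop) (K : Finset V) : Prop :=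
  IsSplit A K ∧ ∀ s, s ∉ K → ∀ w : V, ¬ A w s

open Classical in
/-- The vertices of `K` other than `q` that have no arc to `q`. -/
noncomputable def missedBy {V : Type*} (A : V → V → Prop) (K : Finset V) (q : V) : Finset V :=
  K.filter (fun v => v ≠ q ∧ ¬ A v q)

/-- Lexicographic minimization of a weight monotone under inclusion, and then of the cardinality,
yields a vertex reached within two steps from all of `K`. -/
lemma exists_king_min {V : Type*} (A : V → V → Prop) (K : Finset V) (hK : K.Nonempty)
    (htot : ∀ u ∈ K, ∀ v ∈ K, u ≠ v → A u v ∨ A v u)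
    (w : Finset V → ℕ) (hw : ∀ S T, S ⊆ T → w S ≤ w T) :
    ∃ q ∈ K, (∀ v ∈ K, w (missedBy A K q) ≤ w (missedBy A K v)) ∧
      ∀ u ∈ K, u = q ∨ A u q ∨ ∃ v, A u v ∧ A v q := by
  obtain ⟨q, hq, hmin⟩ := K.exists_min_image
    (fun q => toLex (w (missedBy A K q), (missedBy A K q).card)) hK
  refine ⟨q, hq, fun v hv => ?_, fun u hu => ?_⟩
  · rcases Prod.Lex.le_iff.1 (hmin v hv) with h | h
    · exact h.le
    · exact h.1.le
  · by_contra! hcon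
    obtain ⟨huq, hAuq, h2⟩ := hcon
    have hss : missedBy A K u ⊂ missedBy A K q := by
      refine (Finset.ssubset_iff_of_subset ?_).2 ⟨u, ?_, ?_⟩
      · intro v hv
        simp only [missedBy, Finset.mem_filter] at hv ⊢
        have huv : A u v := (htot v hv.1 u hu hv.2.1).resolve_left hv.2.2
        exact ⟨hv.1, fun h => hAuq (h ▸ huv), h2 v huv⟩
      · simp [missedBy, hu, huq, hAuq]
      · simp [missedBy]
    have h1 := hw _ _ hss.subset
    have h2 := Finset.card_lt_card hss
    rcases Prod.Lex.le_iff.1 (hmin u hu) with h | h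
    · exact absurd h (by simpa using h1)
    · exact absurd h.2 (by simpa using h2)

/-- If every set of missed vertices has `y`-weight at least `c`, then `c` is at most
`(1 - 1/|K|) / 2` times the total weight, by averaging with respect to `y` itself. -/
lemma weighted_min_le {V : Type*} (A : V → V → Prop) (K : Finset V)
    (htot : ∀ u ∈ K, ∀ v ∈ K, u ≠ v → A u v ∨ A v u) (y : V → ℝ) (hy : ∀ v, 0 ≤ y v)
    (c : ℝ) (hc : ∀ v ∈ K, c ≤ ∑ u ∈ missedBy A K v, y u) (hpos : 0 < ∑ v ∈ K, y v) :
    2 * K.card * c ≤ (K.card - 1) * ∑ v ∈ K, y v := by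
  classical
  set m := ∑ v ∈ K, y v with hm
  set S := ∑ v ∈ K, y v ^ 2 with hS
  let e : V → V → ℝ := fun v u => if u ≠ v ∧ ¬ A u v then 1 else 0
  have hB : ∀ v, ∑ u ∈ missedBy A K v, y u = ∑ u ∈ K, e v u * y u := by
    intro v
    simp only [missedBy, Finset.sum_filter, e, ite_mul, one_mul, zero_mul]
  have h1 : m * c ≤ ∑ v ∈ K, ∑ u ∈ K, y v * (e v u * y u) := by
    rw [hm, Finset.sum_mul]
    refine Finset.sum_le_sum fun v hv => ?_
    rw [← Finset.mul_sum, ← hB]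
    exact mul_le_mul_of_nonneg_left (hc v hv) (hy v)
  have h2 : ∑ v ∈ K, ∑ u ∈ K, y v * (e v u * y u)
      = ∑ v ∈ K, ∑ u ∈ K, y u * (e u v * y v) := Finset.sum_comm
  have hdiag : S = ∑ v ∈ K, ∑ u ∈ K, (if u = v then y v * y u else 0) := by
    refine Finset.sum_congr rfl fun v hv => ?_
    rw [Finset.sum_ite_eq' K v]
    simp [hv, sq]
  have h3 : ∑ v ∈ K, ∑ u ∈ K, y v * (e v u * y u)
      + ∑ v ∈ K, ∑ u ∈ K, y u * (e u v * y v) + S ≤ m * m := by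
    rw [hdiag, hm, Finset.sum_mul_sum, ← Finset.sum_add_distrib, ← Finset.sum_add_distrib]
    refine Finset.sum_le_sum fun v hv => ?_
    rw [← Finset.sum_add_distrib, ← Finset.sum_add_distrib]
    refine Finset.sum_le_sum fun u hu => ?_
    have hp := mul_nonneg (hy v) (hy u)
    by_cases huv : u = v
    · subst huv
      simp [e]
    · have hvu : v ≠ u := fun h => huv h.symm
      rcases htot u hu v hv huv with h | h
      · by_cases h' : A v u <;> simp [e, huv, hvu, h, h'] <;> nlinarith
      · by_cases h' : A u v <;> simp [e, huv, hvu, h, h'] <;> nlinarith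
  have hcs : m ^ 2 ≤ K.card * S := sq_sum_le_card_mul_sum_sq
  have hk : (0 : ℝ) ≤ K.card := Nat.cast_nonneg _
  have h4 : 2 * (m * c) + S ≤ m * m := by linarith
  have h5 := mul_le_mul_of_nonneg_left h4 hk
  refine le_of_mul_le_mul_left ?_ hpos
  nlinarith

/-- Every sink-free one-way split digraph `D` has a quasi-kernel of size at most
`(|V(D)| + 3)/2 − √|V(D)|`. -/
theorem stmt4 {V : Type*} [Fintype V] [DecidableEq V] (A : V → V → Prop)
    (hirr : Irreflexive A) (K : Finset V) (hows : IsOneWaySplit A K)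
    (hsinkfree : ∀ v : V, ∃ w : V, A v w) :
    ∃ Q : Finset V, QuasiKernel A Q ∧
      (Q.card : ℝ) ≤ ((Fintype.card V : ℝ) + 3) / 2 - Real.sqrt (Fintype.card V) := by
  classical
  obtain ⟨⟨htot, hind⟩, hsrc⟩ := hows
  rcases isEmpty_or_nonempty V with hV | ⟨⟨x⟩⟩
  · refine ⟨∅, ⟨fun u => isEmptyElim u, fun v => isEmptyElim v⟩, ?_⟩
    norm_num
  choose f hf using hsinkfree
  have hfK : ∀ s, f s ∈ K := fun s => by
    by_contra h
    exact hsrc _ h _ (hf s)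
  let y : V → ℕ := fun v => (Kᶜ.filter (fun s => f s = v)).card
  obtain ⟨q, hq, hmin, hking⟩ := exists_king_min A K ⟨f x, hfK x⟩ htot
    (fun S => ∑ v ∈ S, y v) (fun S T h => Finset.sum_le_sum_of_subset h)
  let R : Finset V := Kᶜ.filter (fun s => ¬ A s q ∧ ∀ w, A s w → ¬ A w q)
  have hRcard : R.card ≤ ∑ v ∈ missedBy A K q, y v := by
    have hmaps : ∀ s ∈ R, f s ∈ missedBy A K q := by
      intro s hs
      simp only [R, Finset.mem_filter] at hs
      simp only [missedBy, Finset.mem_filter]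
      exact ⟨hfK s, fun h => hs.2.1 (h ▸ hf s), hs.2.2 _ (hf s)⟩
    rw [Finset.card_eq_sum_card_fiberwise hmaps]
    exact Finset.sum_le_sum fun v _ =>
      Finset.card_le_card (Finset.filter_subset_filter _ (Finset.filter_subset _ _))
  have hm : ∑ v ∈ K, y v = Kᶜ.card :=
    (Finset.card_eq_sum_card_fiberwise fun s _ => hfK s).symm
  have hn : (Kᶜ.card : ℝ) + K.card = Fintype.card V := by
    exact_mod_cast (add_comm _ _).trans (Finset.card_add_card_compl K)
  have hk : (0 : ℝ) < K.card := by exact_mod_cast Finset.card_pos.2 ⟨q, hq⟩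
  have hmain : 2 * (K.card : ℝ) * R.card ≤ (K.card - 1) * Kᶜ.card := by
    rcases Nat.eq_zero_or_pos Kᶜ.card with h0 | h0
    · have : R.card = 0 := Nat.le_zero.1 (h0 ▸ Finset.card_filter_le _ _)
      simp [this, h0]
    · have hm' : ∑ v ∈ K, (y v : ℝ) = Kᶜ.card := by exact_mod_cast hm
      rw [← hm']
      refine weighted_min_le A K htot (fun v => (y v : ℝ)) (fun v => Nat.cast_nonneg _) _
        (fun v hv => ?_) (by rw [hm']; exact_mod_cast h0)
      exact_mod_cast hRcard.trans (hmin v hv)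
  refine ⟨insert q R, ⟨?_, fun v => ?_⟩, ?_⟩
  · intro u hu v hv huv
    simp only [R, Finset.mem_insert, Finset.mem_filter, Finset.mem_compl] at hu hv
    rcases hv with rfl | hv
    · rcases hu with rfl | hu
      · exact absurd rfl huv
      · exact hu.2.1
    · exact hsrc v hv.1 u
  · by_cases hv : v ∈ K
    · rcases hking v hv with rfl | h | ⟨w, h⟩
      · exact Or.inl (Finset.mem_insert_self _ _)
      · exact Or.inr (Or.inl ⟨q, Finset.mem_insert_self _ _, h⟩)
      · exact Or.inr (Or.inr ⟨w, q, Finset.mem_insert_self _ _, h⟩)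
    · by_cases h1 : A v q
      · exact Or.inr (Or.inl ⟨q, Finset.mem_insert_self _ _, h1⟩)
      by_cases h2 : ∃ w, A v w ∧ A w q
      · obtain ⟨w, h⟩ := h2
        exact Or.inr (Or.inr ⟨w, q, Finset.mem_insert_self _ _, h⟩)
      · left
        simp only [R, Finset.mem_insert, Finset.mem_filter, Finset.mem_compl]
        exact Or.inr ⟨hv, h1, fun w hw hwq => h2 ⟨w, hw, hwq⟩⟩
  · have hQ : ((insert q R).card : ℝ) ≤ R.card + 1 := by exact_mod_cast Finset.card_insert_le q R
    refine hQ.trans ?_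
    have hsq : Real.sqrt (Fintype.card V) ^ 2 = Fintype.card V := Real.sq_sqrt (Nat.cast_nonneg _)
    set r := Real.sqrt (Fintype.card V)
    -- Multiplied by `2k`, the bound is `(√n - k)² ≥ 0` added to `hmain`.
    refine le_of_mul_le_mul_left ?_ (mul_pos two_pos hk)
    rw [← hn] at hsq ⊢
    nlinarith [sq_nonneg (r - K.card)]
end

section
/- Every sink-free one-way split digraph D admits a quasi-kernel Q with |Q| ≤ (1/2)·|V(D)|. -/
open Finset in
/-- In a semicomplete digraph on `K`, weighted by `c`, some vertex has in-weight (closed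
neighborhood) at least half of the total. The factor `c q` in the double count makes the pair
`(u, q)` and the pair `(q, u)` contribute equally. -/
lemma exists_half_weight {V : Type*} (A : V → V → Prop) (K : Finset V)
    [∀ q, DecidablePred fun u => u = q ∨ A u q]
    (hK : ∀ u ∈ K, ∀ v ∈ K, u ≠ v → A u v ∨ A v u) (hne : K.Nonempty) (c : V → ℕ) :
    ∃ q ∈ K, ∑ u ∈ K, c u ≤ 2 * ∑ u ∈ K with (u = q ∨ A u q), c u := by
  by_contra! hlt
  set S := ∑ u ∈ K, c u with hS
  have hpos : 0 < S := by
    obtain ⟨q, hq⟩ := hne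
    exact lt_of_le_of_lt (Nat.zero_le _) (hlt q hq)
  have h1 : ∑ q ∈ K, c q * (2 * ∑ u ∈ K with (u = q ∨ A u q), c u) < ∑ q ∈ K, c q * S := by
    refine sum_lt_sum (fun q hq => Nat.mul_le_mul_left _ (hlt q hq).le) ?_
    -- a vertex of positive weight makes the averaged inequality strict
    obtain ⟨q, hq, hcq⟩ := exists_ne_zero_of_sum_ne_zero hpos.ne'
    exact ⟨q, hq, Nat.mul_lt_mul_of_pos_left (hlt q hq) (Nat.pos_of_ne_zero hcq)⟩
  have h2 : ∑ q ∈ K, c q * (2 * ∑ u ∈ K with (u = q ∨ A u q), c u)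
      = ∑ q ∈ K, ∑ u ∈ K, ((if u = q ∨ A u q then c q * c u else 0)
          + (if q = u ∨ A q u then c u * c q else 0)) := by
    simp_rw [sum_add_distrib]
    rw [sum_comm (f := fun q u => if q = u ∨ A q u then c u * c q else 0), ← two_mul, mul_sum]
    refine sum_congr rfl fun q _ => ?_
    rw [sum_filter, mul_left_comm, mul_sum]
    simp only [mul_ite, mul_zero]
  have h3 : ∑ q ∈ K, c q * S ≤ ∑ q ∈ K, ∑ u ∈ K, ((if u = q ∨ A u q then c q * c u else 0)
          + (if q = u ∨ A q u then c u * c q else 0)) := by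
    refine sum_le_sum fun q hq => ?_
    rw [hS, mul_sum]
    refine sum_le_sum fun u hu => ?_
    have hsc : (u = q ∨ A u q) ∨ (q = u ∨ A q u) := by
      by_cases h : u = q
      · exact Or.inl (Or.inl h)
      · exact (hK u hu q hq h).imp Or.inr Or.inr
    rcases hsc with h | h
    · rw [if_pos h]; exact Nat.le_add_right _ _
    · rw [if_pos h, mul_comm (c u)]; exact Nat.le_add_left _ _
  omega

open Finset in
/-- The vertex of `exists_half_weight` can be chosen so that all of `K` reaches it in at most two
steps: if `v` does not reach `q`, then the closed in-neighborhood of `q` is contained in that of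
`v` and misses `v`, so `v` beats `q` in weight or, at equal weight, in cardinality. -/
lemma exists_heavy_king {V : Type*} (A : V → V → Prop) (K : Finset V)
    [∀ q, DecidablePred fun u => u = q ∨ A u q]
    (hK : ∀ u ∈ K, ∀ v ∈ K, u ≠ v → A u v ∨ A v u) (hne : K.Nonempty) (c : V → ℕ) :
    ∃ q ∈ K, (∑ u ∈ K, c u ≤ 2 * ∑ u ∈ K with (u = q ∨ A u q), c u) ∧
      ∀ v ∈ K, v = q ∨ A v q ∨ ∃ w, A v w ∧ A w q := by
  obtain ⟨p, hp, hmax⟩ := exists_max_image K (fun q => ∑ u ∈ K with (u = q ∨ A u q), c u) hne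
  obtain ⟨r, hr, hhalf⟩ := exists_half_weight A K hK hne c
  let M := {q ∈ K | ∑ u ∈ K with (u = q ∨ A u q), c u = ∑ u ∈ K with (u = p ∨ A u p), c u}
  obtain ⟨q, hq, hcard⟩ := exists_max_image M (fun q => #{u ∈ K | u = q ∨ A u q})
    ⟨p, mem_filter.2 ⟨hp, rfl⟩⟩
  obtain ⟨hqK, hqp⟩ := mem_filter.1 hq
  refine ⟨q, hqK, ?_, fun v hv => ?_⟩
  · have := hmax r hr
    omega
  by_contra! hno
  obtain ⟨hvq, hAvq, hno⟩ := hno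
  have hss : {u ∈ K | u = q ∨ A u q} ⊂ {u ∈ K | u = v ∨ A u v} := by
    refine (ssubset_iff_of_subset fun u hu => ?_).2 ⟨v, by simp [hv], by simp [hvq, hAvq]⟩
    obtain ⟨huK, hu⟩ := mem_filter.1 hu
    refine mem_filter.2 ⟨huK, ?_⟩
    by_cases huv : u = v
    · exact Or.inl huv
    refine Or.inr ((hK u huK v hv huv).resolve_right fun h => ?_)
    rcases hu with rfl | hu
    · exact hAvq h
    · exact hno u h hu
  have hvM : v ∈ M := by
    refine mem_filter.2 ⟨hv, le_antisymm (hmax v hv) ?_⟩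
    rw [← hqp]
    exact sum_le_sum_of_subset hss.subset
  exact absurd (card_lt_card hss) (not_lt.2 (hcard v hvM))

/-- Every sink-free one-way split digraph `D` has a quasi-kernel of size at most `|V(D)|/2`. -/
theorem stmt5 {V : Type*} [Fintype V] [DecidableEq V] (A : V → V → Prop)
    (hirr : Irreflexive A) (K : Finset V) (hows : IsOneWaySplit A K)
    (hsinkfree : ∀ v : V, ∃ w : V, A v w) :
    ∃ Q : Finset V, QuasiKernel A Q ∧ (Q.card : ℝ) ≤ (1 / 2) * Fintype.card V := by
  classical
  obtain ⟨⟨hK, hI⟩, hsrc⟩ := hows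
  choose g hg using hsinkfree
  have hgK : ∀ v, g v ∈ K := fun v => by
    by_contra h
    exact hsrc _ h v (hg v)
  rcases isEmpty_or_nonempty V with hV | ⟨⟨v₀⟩⟩
  · exact ⟨∅, ⟨by simp [Indep], fun v => hV.elim v⟩, by simp⟩
  obtain ⟨q, hqK, hhalf, hking⟩ := exists_heavy_king A K hK ⟨_, hgK v₀⟩
    (fun u => (Kᶜ.filter fun x => g x = u).card)
  -- the vertices outside `K` that do not reach `q` in at most two steps
  let B := Kᶜ.filter fun x => ¬ A x q ∧ ¬ ∃ w, A x w ∧ A w q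
  -- the vertices outside `K` that reach `q` through the chosen outneighbor
  let G := Kᶜ.filter fun x => g x ∈ K.filter fun u => u = q ∨ A u q
  have htot : Kᶜ.card = ∑ u ∈ K, (Kᶜ.filter fun x => g x = u).card :=
    Finset.card_eq_sum_card_fiberwise fun x _ => hgK x
  have hGcard : G.card
      = ∑ u ∈ K.filter (fun u => u = q ∨ A u q), (Kᶜ.filter fun x => g x = u).card := by
    rw [Finset.card_eq_sum_card_fiberwise (f := g) (s := G)
      (t := K.filter fun u => u = q ∨ A u q) fun x hx => (Finset.mem_filter.1 hx).2]
    refine Finset.sum_congr rfl fun u hu => ?_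
    congr 1
    ext x
    simp only [G, Finset.mem_filter]
    constructor
    · rintro ⟨⟨h1, -⟩, h2⟩
      exact ⟨h1, h2⟩
    · rintro ⟨h1, rfl⟩
      exact ⟨⟨h1, Finset.mem_filter.1 hu⟩, rfl⟩
  have hdisj : Disjoint B G := by
    rw [Finset.disjoint_left]
    intro x hB hG
    obtain ⟨-, h1, h2⟩ := Finset.mem_filter.1 hB
    obtain ⟨-, h3⟩ := Finset.mem_filter.1 (Finset.mem_filter.1 hG).2
    rcases h3 with h3 | h3
    · exact h1 (h3 ▸ hg x)
    · exact h2 ⟨g x, hg x, h3⟩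
  have hBG : B.card + G.card ≤ Kᶜ.card := by
    rw [← Finset.card_union_of_disjoint hdisj]
    exact Finset.card_le_card
      (Finset.union_subset (Finset.filter_subset _ _) (Finset.filter_subset _ _))
  have hk : 2 ≤ K.card :=
    Finset.one_lt_card.2 ⟨q, hqK, g q, hgK q, fun h => hirr q (h.symm.subst (motive := A q) (hg q))⟩
  have hBK : ∀ x ∈ B, x ∉ K := fun x hx => by simpa using (Finset.mem_filter.1 hx).1
  refine ⟨insert q B, ⟨?_, fun v => ?_⟩, ?_⟩
  · intro u hu v hv huv
    rcases Finset.mem_insert.1 hv with rfl | hvB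
    · rcases Finset.mem_insert.1 hu with rfl | huB
      · exact absurd rfl huv
      · exact (Finset.mem_filter.1 huB).2.1
    · exact hsrc v (hBK v hvB) u
  · have hqQ : q ∈ insert q B := Finset.mem_insert_self _ _
    by_cases h1 : A v q
    · exact Or.inr (Or.inl ⟨q, hqQ, h1⟩)
    by_cases h2 : ∃ w, A v w ∧ A w q
    · obtain ⟨w, hw⟩ := h2
      exact Or.inr (Or.inr ⟨w, q, hqQ, hw⟩)
    left
    by_cases hv : v ∈ K
    · rcases hking v hv with rfl | h | h
      · exact hqQ
      · exact absurd h h1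
      · exact absurd h h2
    · exact Finset.mem_insert_of_mem (Finset.mem_filter.2 ⟨Finset.mem_compl.2 hv, h1, h2⟩)
  · have hins := Finset.card_insert_le q B
    have hV := Finset.card_add_card_compl K
    have h2 : 2 * (insert q B).card ≤ Fintype.card V := by omega
    have h3 : (2 : ℝ) * (insert q B).card ≤ Fintype.card V := by exact_mod_cast h2
    linarith
end

section
/- For every positive integer n, the minimum size of a quasi-kernel of the digraph D_n equals n² + 1. -/
/-- Vertex set of the digraph `D_n`: `Sum.inl i` is the clique vertex `k_i` and
`Sum.inr (i, j)` is the independent vertex `s_{i,j+1}`. -/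
abbrev DnVert (n : ℕ) := Fin (2 * n + 1) ⊕ (Fin (2 * n + 1) × Fin n)

/-- Arc relation of the digraph `D_n`: arcs `(k_i, k_{(i+j) mod (2n+1)})` for `1 ≤ j ≤ n`,
and arcs `(s_{ij}, k_i)`. -/
def DnArc (n : ℕ) : DnVert n → DnVert n → Prop
  | Sum.inl i, Sum.inl i' =>
      ∃ j : ℕ, 1 ≤ j ∧ j ≤ n ∧ (i' : ℕ) = ((i : ℕ) + j) % (2 * n + 1)
  | Sum.inr p, Sum.inl i' => i' = p.1
  | _, _ => False

/-- Adjacency within the tournament, free of modular arithmetic: the first case is an arc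
that does not wrap around, the second one that does. -/
lemma arc_inl_iff {n : ℕ} (i i' : Fin (2 * n + 1)) :
    DnArc n (Sum.inl i) (Sum.inl i') ↔
      ((i : ℕ) < i' ∧ (i' : ℕ) ≤ i + n) ∨ (i' : ℕ) + n + 1 ≤ i := by
  have hi := i.isLt
  have hi' := i'.isLt
  simp only [DnArc]
  constructor
  · rintro ⟨j, h1, h2, h3⟩
    rcases lt_or_ge ((i : ℕ) + j) (2 * n + 1) with h | h
    · rw [Nat.mod_eq_of_lt h] at h3
      omega
    · rw [Nat.mod_eq_sub_mod h, Nat.mod_eq_of_lt (by omega)] at h3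
      omega
  · rintro (h | h)
    · refine ⟨i' - i, by omega, by omega, ?_⟩
      rw [Nat.mod_eq_of_lt] <;> omega
    · refine ⟨i' + (2 * n + 1) - i, by omega, by omega, ?_⟩
      rw [Nat.mod_eq_sub_mod (by omega), Nat.mod_eq_of_lt] <;> omega

/-- The index `(c + j + 1) mod (2n+1)` of the `(j+1)`-st out-neighbour of `k_c`, for
`0 ≤ j < n`. The reduction is written as a case split so that `omega` can handle it. -/
def outNbr {n : ℕ} (c : Fin (2 * n + 1)) (j : Fin n) : Fin (2 * n + 1) :=
  ⟨if (c : ℕ) + j + 1 < 2 * n + 1 then c + j + 1 else c + j + 1 - (2 * n + 1), by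
    have := c.isLt
    have := j.isLt
    split_ifs <;> omega⟩

/-- Parametrization of the set consisting of `k_c` (the value at `none`) and of all sources
attached to out-neighbours of `k_c`. -/
def core {n : ℕ} (c : Fin (2 * n + 1)) : Option (Fin n × Fin n) → DnVert n
  | none => Sum.inl c
  | some (j, l) => Sum.inr (outNbr c j, l)

lemma outNbr_injective {n : ℕ} (c : Fin (2 * n + 1)) : Function.Injective (outNbr c) := by
  intro j j' h
  have hc := c.isLt
  have hj := j.isLt
  have hj' := j'.isLt
  have h' := congrArg Fin.val h
  simp only [outNbr] at h'
  ext
  split_ifs at h' <;> omega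

lemma core_injective {n : ℕ} (c : Fin (2 * n + 1)) : Function.Injective (core c) := by
  rintro (_ | ⟨j, l⟩) (_ | ⟨j', l'⟩) h
  · rfl
  · simp [core] at h
  · simp [core] at h
  · simp only [core, Sum.inr.injEq, Prod.mk.injEq] at h
    rw [outNbr_injective c h.1, h.2]

lemma card_image_core {n : ℕ} (c : Fin (2 * n + 1)) :
    (Finset.univ.image (core c)).card = n ^ 2 + 1 := by
  rw [Finset.card_image_of_injective _ (core_injective c)]
  simp [sq]

lemma outNbr_not_arc {n : ℕ} (c : Fin (2 * n + 1)) (j : Fin n) :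
    outNbr c j ≠ c ∧ ¬ DnArc n (Sum.inl (outNbr c j)) (Sum.inl c) := by
  have hc := c.isLt
  have hj := j.isLt
  rw [arc_inl_iff, Ne, Fin.ext_iff]
  simp only [outNbr]
  split_ifs <;> omega

lemma tournament {n : ℕ} {i i' : Fin (2 * n + 1)} (h : i ≠ i') :
    DnArc n (Sum.inl i) (Sum.inl i') ∨ DnArc n (Sum.inl i') (Sum.inl i) := by
  have hi := i.isLt
  have hi' := i'.isLt
  rw [Ne, Fin.ext_iff] at h
  rw [arc_inl_iff, arc_inl_iff]
  omega

lemma not_arc_inr {n : ℕ} (v : DnVert n) (p : Fin (2 * n + 1) × Fin n) :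
    ¬ DnArc n v (Sum.inr p) := by
  cases v <;> simp [DnArc]

lemma exists_inl_mem {n : ℕ} {Q : Finset (DnVert n)} (hQ : QuasiKernel (DnArc n) Q) :
    ∃ c, Sum.inl c ∈ Q := by
  rcases hQ.2 (Sum.inl 0) with h | ⟨q, hq, h⟩ | ⟨w, q, hq, -, h⟩
  · exact ⟨0, h⟩
  all_goals
    rcases q with c | p
    · exact ⟨c, hq⟩
    · exact absurd h (not_arc_inr _ _)

lemma image_core_subset {n : ℕ} {Q : Finset (DnVert n)} (hQ : QuasiKernel (DnArc n) Q)
    {c : Fin (2 * n + 1)} (hc : Sum.inl c ∈ Q) : Finset.univ.image (core c) ⊆ Q := by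
  have huniq : ∀ c', Sum.inl c' ∈ Q → c' = c := by
    intro c' hc'
    by_contra hne
    rcases tournament hne with h | h
    · exact hQ.1 _ hc' _ hc (by simpa using hne) h
    · exact hQ.1 _ hc _ hc' (by simpa using Ne.symm hne) h
  intro v hv
  obtain ⟨x, -, rfl⟩ := Finset.mem_image.mp hv
  rcases x with _ | ⟨j, l⟩
  · exact hc
  · obtain ⟨hne, hna⟩ := outNbr_not_arc c j
    rcases hQ.2 (core c (some (j, l))) with h | ⟨q, hq, h⟩ | ⟨w, q, hq, h, h'⟩
    · exact h
    · rcases q with c' | p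
      · obtain rfl := huniq c' hq
        exact absurd (Eq.symm h) hne
      · exact absurd h (not_arc_inr _ _)
    · rcases q with c' | p
      · obtain rfl := huniq c' hq
        rcases w with w | p
        · have hw : w = outNbr c' j := h
          subst hw
          exact absurd h' hna
        · exact absurd h (not_arc_inr _ _)
      · exact absurd h' (not_arc_inr _ _)

lemma quasiKernel_image_core {n : ℕ} (hn : 1 ≤ n) :
    QuasiKernel (DnArc n) (Finset.univ.image (core (0 : Fin (2 * n + 1)))) := by
  have h0 : Sum.inl 0 ∈ Finset.univ.image (core (0 : Fin (2 * n + 1))) :=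
    Finset.mem_image.mpr ⟨none, Finset.mem_univ _, rfl⟩
  refine ⟨?_, ?_⟩
  · intro u hu v hv huv h
    obtain ⟨x, -, rfl⟩ := Finset.mem_image.mp hu
    obtain ⟨y, -, rfl⟩ := Finset.mem_image.mp hv
    rcases y with _ | ⟨j, l⟩
    · rcases x with _ | ⟨j, l⟩
      · exact huv rfl
      · exact (outNbr_not_arc 0 j).1 (Eq.symm h)
    · exact not_arc_inr _ _ h
  · rintro (i | ⟨i, l⟩)
    · by_cases hi0 : i = 0
      · exact Or.inl (hi0 ▸ h0)
      · have hi : (i : ℕ) ≠ 0 := fun h => hi0 (Fin.ext h)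
        rcases lt_or_ge n (i : ℕ) with h | h
        · exact Or.inr (Or.inl ⟨_, h0, (arc_inl_iff _ _).2 (Or.inr (by simpa using h))⟩)
        · -- `k_{n+1}` is an out-neighbour of each of `k_1, …, k_n` and an in-neighbour of `k_0`.
          refine Or.inr (Or.inr ⟨Sum.inl ⟨n + 1, by omega⟩, _, h0, ?_, ?_⟩)
          · exact (arc_inl_iff _ _).2 (Or.inl ⟨by simp only; omega, by simp only; omega⟩)
          · exact (arc_inl_iff _ _).2 (Or.inr (by simp))
    · by_cases hi0 : i = 0
      · exact Or.inr (Or.inl ⟨_, h0, hi0.symm⟩)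
      · have hi : (i : ℕ) ≠ 0 := fun h => hi0 (Fin.ext h)
        rcases lt_or_ge n (i : ℕ) with h | h
        · exact Or.inr (Or.inr ⟨Sum.inl i, _, h0, rfl,
            (arc_inl_iff _ _).2 (Or.inr (by simpa using h))⟩)
        · refine Or.inl (Finset.mem_image.mpr
            ⟨some (⟨i - 1, by omega⟩, l), Finset.mem_univ _, ?_⟩)
          have : outNbr (0 : Fin (2 * n + 1)) ⟨i - 1, by omega⟩ = i := by
            have hz : ((0 : Fin (2 * n + 1)) : ℕ) = 0 := rfl
            ext
            simp only [outNbr]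
            split_ifs <;> omega
          simp only [core, this]

/-- For every positive integer `n`, the minimum size of a quasi-kernel of `D_n` is `n² + 1`. -/
theorem stmt6 (n : ℕ) (hn : 1 ≤ n) :
    IsLeast {k : ℕ | ∃ Q : Finset (DnVert n), QuasiKernel (DnArc n) Q ∧ Q.card = k}
      (n ^ 2 + 1) := by
  refine ⟨⟨_, quasiKernel_image_core hn, card_image_core 0⟩, ?_⟩
  rintro k ⟨Q, hQ, rfl⟩
  obtain ⟨c, hc⟩ := exists_inl_mem hQ
  rw [← card_image_core c]
  exact Finset.card_le_card (image_core_subset hQ hc)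
end

section
/- Let q(D) denote the minimum size of a quasi-kernel of a digraph D. Then the sequence q(D'_n)/|V(D'_n)| converges to 1/2 as n → ∞. -/
def Dn'Arc (n : ℕ) (u v : DnVert n) : Prop :=
  DnArc n u v ∨
    ∃ (i : Fin (2 * n + 1)) (p : Fin (2 * n + 1) × Fin n),
      u = Sum.inl i ∧ v = Sum.inr p ∧ (i : ℕ) = 0 ∧ 1 ≤ (p.1 : ℕ)

noncomputable def qDn' (n : ℕ) : ℕ :=
  sInf {k : ℕ | ∃ Q : Finset (DnVert n), QuasiKernel (Dn'Arc n) Q ∧ Q.card = k}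

/-- The arcs of the rotational tournament, with the reduction modulo `2n + 1` made explicit. -/
lemma arc_inl_inl {n : ℕ} (i i' : Fin (2 * n + 1)) :
    Dn'Arc n (Sum.inl i) (Sum.inl i') ↔
      ((i : ℕ) < i' ∧ (i' : ℕ) ≤ i + n) ∨ (i' : ℕ) + n + 1 ≤ i := by
  have hi := i.2
  have hi' := i'.2
  simp only [Dn'Arc, DnArc, reduceCtorEq, false_and, and_false, exists_false, or_false]
  constructor
  · rintro ⟨j, h1, h2, h3⟩
    rcases lt_or_ge ((i : ℕ) + j) (2 * n + 1) with h | h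
    · rw [Nat.mod_eq_of_lt h] at h3
      omega
    · rw [Nat.mod_eq_sub_mod h, Nat.mod_eq_of_lt (by omega)] at h3
      omega
  · rintro (h | h)
    · refine ⟨i' - i, by omega, by omega, ?_⟩
      rw [Nat.mod_eq_of_lt (by omega)]
      omega
    · refine ⟨i' + (2 * n + 1) - i, by omega, by omega, ?_⟩
      rw [Nat.mod_eq_sub_mod (by omega), Nat.mod_eq_of_lt (by omega)]
      omega

lemma arc_inr_inl {n : ℕ} (p : Fin (2 * n + 1) × Fin n) (i : Fin (2 * n + 1)) :
    Dn'Arc n (Sum.inr p) (Sum.inl i) ↔ i = p.1 := by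
  simp [Dn'Arc, DnArc]

lemma arc_inl_inr {n : ℕ} (i : Fin (2 * n + 1)) (p : Fin (2 * n + 1) × Fin n) :
    Dn'Arc n (Sum.inl i) (Sum.inr p) ↔ (i : ℕ) = 0 ∧ 1 ≤ (p.1 : ℕ) := by
  simp [Dn'Arc, DnArc]

lemma not_arc_inr_inr {n : ℕ} (p p' : Fin (2 * n + 1) × Fin n) :
    ¬ Dn'Arc n (Sum.inr p) (Sum.inr p') := by
  simp [Dn'Arc, DnArc]

/-- A vertex `s_{ij}` with `i ≠ 0` lies in `Q` unless `Q` contains `k_i` or an out-neighbour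
of `k_i` in the tournament. -/
lemma mem_or_of_quasiKernel {n : ℕ} {Q : Finset (DnVert n)} (hQ : QuasiKernel (Dn'Arc n) Q)
    (i : Fin (2 * n + 1)) (j : Fin n) (hi : (i : ℕ) ≠ 0) :
    Sum.inr (i, j) ∈ Q ∨ ∃ m, Sum.inl m ∈ Q ∧ (m = i ∨ Dn'Arc n (Sum.inl i) (Sum.inl m)) := by
  rcases hQ.2 (Sum.inr (i, j)) with h | ⟨q, hq, h⟩ | ⟨w, q, hq, h, h'⟩
  · exact Or.inl h
  · rcases q with m | p
    · exact Or.inr ⟨m, hq, Or.inl ((arc_inr_inl _ _).1 h)⟩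
    · exact absurd h (not_arc_inr_inr _ _)
  · rcases w with w | p
    · obtain rfl : w = i := (arc_inr_inl _ _).1 h
      rcases q with m | p
      · exact Or.inr ⟨m, hq, Or.inr h'⟩
      · exact absurd ((arc_inl_inr _ _).1 h').1 hi
    · exact absurd h (not_arc_inr_inr _ _)

lemma inl_unique {n : ℕ} {Q : Finset (DnVert n)} (hQ : QuasiKernel (Dn'Arc n) Q)
    {i m : Fin (2 * n + 1)} (hi : Sum.inl i ∈ Q) (hm : Sum.inl m ∈ Q) : i = m := by
  by_contra hne
  have h1 := hQ.1 _ hi _ hm (by simpa using hne)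
  have h2 := hQ.1 _ hm _ hi (by simpa using Ne.symm hne)
  rw [arc_inl_inl] at h1 h2
  have := i.2
  have := m.2
  have : (i : ℕ) ≠ m := fun h => hne (Fin.ext h)
  omega

/-- The indices `i ≠ 0` of those `k_i` that are out-neighbours of `k_m`. -/
def outIdx (n : ℕ) (m : Fin (2 * n + 1)) : Finset (Fin (2 * n + 1)) :=
  Finset.univ.filter fun i => (i : ℕ) ≠ 0 ∧
    (((m : ℕ) < i ∧ (i : ℕ) ≤ m + n) ∨ (i : ℕ) + n + 1 ≤ m)

lemma sub_one_le_card_outIdx (n : ℕ) (m : Fin (2 * n + 1)) : n - 1 ≤ (outIdx n m).card := by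
  have hm := m.2
  -- `a ↦ m + 1 + a (mod 2n + 1)` enumerates the out-neighbours of `k_m`.
  let g : Fin n → Fin (2 * n + 1) := fun a =>
    ⟨if (m : ℕ) + 1 + a < 2 * n + 1 then m + 1 + a else m + 1 + a - (2 * n + 1), by
      have := a.2
      split_ifs <;> omega⟩
  have hg : Function.Injective g := by
    intro a b hab
    have ha := a.2
    have hb := b.2
    have h := congrArg Fin.val hab
    simp only [g] at h
    apply Fin.ext
    split_ifs at h <;> omega
  have hsub : (Finset.univ.image g).erase 0 ⊆ outIdx n m := by
    intro i hi
    obtain ⟨h0, hi⟩ := Finset.mem_erase.1 hi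
    obtain ⟨a, -, rfl⟩ := Finset.mem_image.1 hi
    have ha := a.2
    have h0' : ((g a : Fin (2 * n + 1)) : ℕ) ≠ 0 := fun h => h0 (Fin.ext h)
    refine Finset.mem_filter.2 ⟨Finset.mem_univ _, h0', ?_⟩
    simp only [g]
    split_ifs <;> omega
  have h1 := Finset.card_le_card hsub
  have h2 := Finset.pred_card_le_card_erase (s := Finset.univ.image g) (a := 0)
  rw [Finset.card_image_of_injective _ hg, Finset.card_univ, Fintype.card_fin] at h2
  exact h2.trans h1

lemma sub_one_mul_le_card {n : ℕ} {Q : Finset (DnVert n)}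
    (hQ : QuasiKernel (Dn'Arc n) Q) : (n - 1) * n ≤ Q.card := by
  -- If `Q` misses the whole tournament, any `m` serves.
  obtain ⟨m, hm⟩ : ∃ m : Fin (2 * n + 1), ∀ i, Sum.inl i ∈ Q → i = m := by
    by_cases h : ∃ m : Fin (2 * n + 1), Sum.inl m ∈ Q
    · obtain ⟨m, hm⟩ := h
      exact ⟨m, fun i hi => inl_unique hQ hi hm⟩
    · exact ⟨0, fun i hi => absurd ⟨i, hi⟩ h⟩
  have hsub : ((outIdx n m) ×ˢ (Finset.univ : Finset (Fin n))).map
      (Function.Embedding.inr : _ ↪ DnVert n) ⊆ Q := by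
    intro v hv
    obtain ⟨⟨i, j⟩, hp, rfl⟩ := Finset.mem_map.1 hv
    obtain ⟨-, h0, hi⟩ := Finset.mem_filter.1 (Finset.mem_product.1 hp).1
    rcases mem_or_of_quasiKernel hQ i j h0 with h | ⟨m', hm', h⟩
    · exact h
    · exfalso
      obtain rfl := hm _ hm'
      rw [arc_inl_inl, Fin.ext_iff] at h
      have := i.2
      have := m'.2
      simp only at hi
      omega
  have h := Finset.card_le_card hsub
  rw [Finset.card_map, Finset.card_product, Finset.card_univ, Fintype.card_fin] at h
  exact (Nat.mul_le_mul_right n (sub_one_le_card_outIdx n m)).trans h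

/-- The quasi-kernel `{k_1} ∪ {s_{ij} : 2 ≤ i ≤ n + 1}`. -/
def smallQ (n : ℕ) (hn : 1 ≤ n) : Finset (DnVert n) :=
  Finset.disjSum {⟨1, by omega⟩}
    ((outIdx n ⟨1, by omega⟩) ×ˢ (Finset.univ : Finset (Fin n)))

lemma inl_mem_smallQ {n : ℕ} (hn : 1 ≤ n) (i : Fin (2 * n + 1)) :
    Sum.inl i ∈ smallQ n hn ↔ (i : ℕ) = 1 := by
  simp [smallQ, Fin.ext_iff]

lemma inr_mem_smallQ {n : ℕ} (hn : 1 ≤ n) (p : Fin (2 * n + 1) × Fin n) :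
    Sum.inr p ∈ smallQ n hn ↔ 2 ≤ (p.1 : ℕ) ∧ (p.1 : ℕ) ≤ n + 1 := by
  simp only [smallQ, outIdx, Finset.inr_mem_disjSum, Finset.mem_product, Finset.mem_filter,
    Finset.mem_univ, true_and, and_true]
  omega

lemma smallQ_quasiKernel {n : ℕ} (hn : 1 ≤ n) : QuasiKernel (Dn'Arc n) (smallQ n hn) := by
  have h1 : 1 < 2 * n + 1 := by omega
  have hk : (Sum.inl ⟨1, h1⟩ : DnVert n) ∈ smallQ n hn := (inl_mem_smallQ hn _).2 rfl
  refine ⟨?_, ?_⟩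
  · rintro (i | p) hu (i' | p') hv hne h
    · rw [inl_mem_smallQ] at hu hv
      exact hne (congrArg Sum.inl (Fin.ext (hu.trans hv.symm)))
    · rw [inl_mem_smallQ] at hu
      have := ((arc_inl_inr _ _).1 h).1
      omega
    · rw [inl_mem_smallQ] at hv
      rw [inr_mem_smallQ] at hu
      rw [(arc_inr_inl _ _).1 h] at hv
      omega
    · exact not_arc_inr_inr _ _ h
  · rintro (i | ⟨i, j⟩)
    · have hi := i.2
      by_cases hi1 : (i : ℕ) = 1
      · exact Or.inl ((inl_mem_smallQ hn _).2 hi1)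
      by_cases hi2 : (i : ℕ) = 0 ∨ n + 2 ≤ (i : ℕ)
      · refine Or.inr (Or.inl ⟨_, hk, (arc_inl_inl _ _).2 ?_⟩)
        simp only
        omega
      · -- `k_i → k_{i+n} → k_1`, where `i + n` wraps around to `0` for `i = n + 1`.
        refine Or.inr (Or.inr ⟨Sum.inl ⟨if (i : ℕ) = n + 1 then 0 else i + n, ?_⟩, _, hk,
          (arc_inl_inl _ _).2 ?_, (arc_inl_inl _ _).2 ?_⟩)
        · split_ifs <;> omega
        · simp only
          split_ifs <;> omega
        · simp only
          split_ifs <;> omega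
    · have hi := i.2
      by_cases hi1 : (i : ℕ) = 1
      · exact Or.inr (Or.inl ⟨_, hk, (arc_inr_inl _ _).2 (Fin.ext hi1.symm)⟩)
      by_cases hi2 : (i : ℕ) = 0 ∨ n + 2 ≤ (i : ℕ)
      · refine Or.inr (Or.inr ⟨Sum.inl i, _, hk, (arc_inr_inl _ _).2 rfl,
          (arc_inl_inl _ _).2 ?_⟩)
        simp only
        omega
      · refine Or.inl ((inr_mem_smallQ hn _).2 ?_)
        simp only
        omega

lemma card_smallQ_le {n : ℕ} (hn : 1 ≤ n) : (smallQ n hn).card ≤ n * n + 1 := by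
  have h : (outIdx n ⟨1, by omega⟩).card ≤ n := by
    have hsub : (outIdx n ⟨1, by omega⟩).map Fin.valEmbedding ⊆ Finset.Icc 2 (n + 1) := by
      intro x hx
      obtain ⟨i, hi, rfl⟩ := Finset.mem_map.1 hx
      obtain ⟨-, h0, hi⟩ := Finset.mem_filter.1 hi
      rw [Finset.mem_Icc, Fin.valEmbedding_apply]
      simp only at hi
      omega
    have := Finset.card_le_card hsub
    rw [Finset.card_map, Nat.card_Icc] at this
    omega
  rw [smallQ, Finset.card_disjSum, Finset.card_singleton, Finset.card_product, Finset.card_univ,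
    Fintype.card_fin]
  have := Nat.mul_le_mul_right n h
  omega

lemma qDn'_le {n : ℕ} (hn : 1 ≤ n) : qDn' n ≤ n * n + 1 :=
  le_trans (Nat.sInf_le (m := (smallQ n hn).card) ⟨_, smallQ_quasiKernel hn, rfl⟩)
    (card_smallQ_le hn)

lemma le_qDn' {n : ℕ} (hn : 1 ≤ n) : (n - 1) * n ≤ qDn' n := by
  -- The infimum over `ℕ` is attained because some quasi-kernel exists.
  obtain ⟨Q, hQ, h⟩ := Nat.sInf_mem
    (s := {k : ℕ | ∃ Q : Finset (DnVert n), QuasiKernel (Dn'Arc n) Q ∧ Q.card = k})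
    ⟨_, smallQ n hn, smallQ_quasiKernel hn, rfl⟩
  exact (sub_one_mul_le_card hQ).trans h.le

/-- `q(D'_n)/|V(D'_n)| → 1/2` as `n → ∞`. -/
theorem stmt9 :
    Filter.Tendsto (fun n : ℕ => (qDn' n : ℝ) / (Fintype.card (DnVert n) : ℝ))
      Filter.atTop (nhds (1 / 2)) := by
  have hcard (n : ℕ) : (Fintype.card (DnVert n) : ℝ) = 2 * (n : ℝ) ^ 2 + 3 * n + 1 := by
    simp only [DnVert, Fintype.card_sum, Fintype.card_prod, Fintype.card_fin]
    push_cast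
    ring
  have hlim : Filter.Tendsto (fun n : ℕ => (1 / 2 : ℝ) - 2 * (1 / (n : ℝ)))
      Filter.atTop (nhds (1 / 2)) := by
    have := (tendsto_one_div_atTop_nhds_zero_nat (𝕜 := ℝ)).const_mul 2 |>.const_sub (1 / 2)
    rwa [mul_zero, sub_zero] at this
  refine tendsto_of_tendsto_of_tendsto_of_le_of_le' hlim tendsto_const_nhds ?_ ?_
  · filter_upwards [Filter.eventually_ge_atTop 1] with n hn
    have hn' : (1 : ℝ) ≤ n := by exact_mod_cast hn
    have h : ((n : ℝ) - 1) * n ≤ qDn' n := by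
      have := le_qDn' hn
      rw [← Nat.cast_le (α := ℝ)] at this
      push_cast [hn] at this
      exact this
    rw [hcard, le_div_iff₀ (by positivity)]
    have hx : (1 / (n : ℝ)) * n = 1 := by field_simp
    have hx0 : 0 ≤ 1 / (n : ℝ) := by positivity
    refine le_trans ?_ h
    have e : (1 / 2 - 2 * (1 / (n : ℝ))) * (2 * (n : ℝ) ^ 2 + 3 * n + 1)
        = (n : ℝ) ^ 2 + 3 / 2 * n + 1 / 2 - 4 * n - 6 - 2 * (1 / (n : ℝ)) := by
      linear_combination (-(4 * (n : ℝ)) - 6) * hx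
    rw [e]
    nlinarith
  · filter_upwards [Filter.eventually_ge_atTop 1] with n hn
    have hn' : (1 : ℝ) ≤ n := by exact_mod_cast hn
    have h : (qDn' n : ℝ) ≤ n * n + 1 := by exact_mod_cast qDn'_le hn
    rw [hcard, div_le_iff₀ (by positivity)]
    nlinarith
end

section
/- Let ℱ be a hereditary class of digraphs and let α ≥ 1/2 be a real number. Then the following are equivalent: (i) every sink-free digraph D in ℱ has a quasi-kernel of size at most α·|V(D)|; (ii) every digraph D in ℱ has a quasi-kernel of size at most α·(|V(D)| + |S(D)| − |N⁻(S(D))|). -/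
/-!
(ii) specialises to (i) because a sink-free digraph has no sinks. For the converse, argue by
induction on `|V(D)|`; only the case where the set `S` of sinks is nonempty needs work. Put
`N = N⁻(S)` and `R = V \ (S ∪ N)`. Since `1 ≤ 2α`, it suffices to extend `S` by at most `α|R|`
vertices of `R`. Every sink of `D[R]` reaches `S` in two steps through `N`, so it needs no further
absorption; the sinks `T` of `D[R]` matter only as out-neighbours of `M = N⁻(T)` in `D[R]`. Choosing
one out-neighbour in `T` for each vertex of `M` gives `T' ⊆ T` with `|T'| ≤ |M|`, and after deleting
`T \ T'` from `D[R]` the sinks are exactly `T'`, while their in-neighbourhood contains `M`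
(`exists_reduced_subset`). The induction hypothesis for this smaller digraph thus yields a
quasi-kernel with at most `α|R|` vertices, and its union with `S` is a quasi-kernel of `D`
(`quasiKernel_sinks_union`).
-/

/-- A finite loopless digraph, with vertices drawn from `ℕ`. -/
structure FinDigraph where
  verts : Finset ℕ
  Adj : ℕ → ℕ → Prop
  irrefl : ∀ v, ¬ Adj v v
  mem_of_adj : ∀ u v, Adj u v → u ∈ verts ∧ v ∈ verts

/-- The subdigraph induced by a set `s` of vertices. -/
def FinDigraph.induce (D : FinDigraph) (s : Finset ℕ) : FinDigraph where
  verts := D.verts ∩ s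
  Adj u v := D.Adj u v ∧ u ∈ s ∧ v ∈ s
  irrefl v h := D.irrefl v h.1
  mem_of_adj u v h :=
    ⟨Finset.mem_inter.2 ⟨(D.mem_of_adj u v h.1).1, h.2.1⟩,
     Finset.mem_inter.2 ⟨(D.mem_of_adj u v h.1).2, h.2.2⟩⟩

/-- A class of digraphs is hereditary if it is closed under taking induced subdigraphs. -/
def Hereditary (F : Set FinDigraph) : Prop :=
  ∀ D ∈ F, ∀ s : Finset ℕ, D.induce s ∈ F

def FinDigraph.QuasiKernel (D : FinDigraph) (Q : Finset ℕ) : Prop :=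
  Q ⊆ D.verts ∧ (∀ u ∈ Q, ∀ v ∈ Q, u ≠ v → ¬ D.Adj u v) ∧
    ∀ v ∈ D.verts, v ∈ Q ∨ (∃ q ∈ Q, D.Adj v q) ∨ (∃ w, ∃ q ∈ Q, D.Adj v w ∧ D.Adj w q)

def FinDigraph.SinkFree (D : FinDigraph) : Prop :=
  ∀ v ∈ D.verts, ∃ w, D.Adj v w

open Classical in
/-- The set `S(D)` of sinks of `D`. -/
noncomputable def FinDigraph.sinks (D : FinDigraph) : Finset ℕ :=
  D.verts.filter (fun v => ∀ w, ¬ D.Adj v w)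

open Classical in
/-- `N⁻(S)`: the vertices outside `S` having an arc to some vertex of `S`. -/
noncomputable def FinDigraph.inN (D : FinDigraph) (S : Finset ℕ) : Finset ℕ :=
  (D.verts \ S).filter (fun v => ∃ s ∈ S, D.Adj v s)

theorem FinDigraph.mem_sinks {D : FinDigraph} {v : ℕ} :
    v ∈ D.sinks ↔ v ∈ D.verts ∧ ∀ w, ¬ D.Adj v w := by
  simp [FinDigraph.sinks]

theorem FinDigraph.mem_inN {D : FinDigraph} {S : Finset ℕ} {v : ℕ} :
    v ∈ D.inN S ↔ (v ∈ D.verts ∧ v ∉ S) ∧ ∃ s ∈ S, D.Adj v s := by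
  simp [FinDigraph.inN]

/-- From `R` one can delete some of the sinks of `D[R]` so that the remaining induced subdigraph
has at most as many sinks as vertices with an arc to a sink. -/
theorem FinDigraph.exists_reduced_subset (D : FinDigraph) (R : Finset ℕ) (hR : R ⊆ D.verts) :
    ∃ P ⊆ R, (∀ v ∈ R, v ∉ P → ∀ w ∈ R, ¬ D.Adj v w) ∧
      (D.induce P).sinks.card ≤ ((D.induce P).inN (D.induce P).sinks).card := by
  classical
  set T := (D.induce R).sinks with hT
  set M := (D.induce R).inN T with hM
  have hTmem : ∀ v, v ∈ T ↔ v ∈ R ∧ ∀ w ∈ R, ¬ D.Adj v w := by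
    intro v
    rw [hT, mem_sinks]
    simp only [FinDigraph.induce, Finset.mem_inter]
    grind
  have hMmem : ∀ v, v ∈ M ↔ v ∈ R ∧ v ∉ T ∧ ∃ t ∈ T, D.Adj v t := by
    intro v
    rw [hM, mem_inN]
    simp only [FinDigraph.induce, Finset.mem_inter]
    grind
  have hex : ∀ v, ∃ t, v ∈ M → t ∈ T ∧ D.Adj v t := by
    intro v
    by_cases hv : v ∈ M
    · obtain ⟨t, ht⟩ := ((hMmem v).1 hv).2.2
      exact ⟨t, fun _ => ht⟩
    · exact ⟨0, fun h => absurd h hv⟩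
  choose f hf using hex
  set P := R \ (T \ M.image f) with hP
  have hPmem : ∀ v, v ∈ P ↔ v ∈ R ∧ (v ∈ T → v ∈ M.image f) := by
    grind
  have hfT : ∀ t ∈ M.image f, t ∈ T := by
    grind
  have hsinks : (D.induce P).sinks = M.image f := by
    ext v
    rw [mem_sinks]
    simp only [FinDigraph.induce, Finset.mem_inter]
    constructor
    · rintro ⟨⟨_, hvP⟩, hv⟩
      by_contra hvf
      have hvT : v ∉ T := fun h => hvf (((hPmem v).1 hvP).2 h)
      have hvR := ((hPmem v).1 hvP).1
      obtain ⟨w, hwR, hvw⟩ : ∃ w ∈ R, D.Adj v w := by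
        grind
      by_cases hwT : w ∈ T
      -- an out-neighbour in `T` may have been deleted, but the one chosen by `f` was kept
      · have hvM : v ∈ M := (hMmem v).2 ⟨hvR, hvT, w, hwT, hvw⟩
        have hfv : f v ∈ M.image f := Finset.mem_image_of_mem f hvM
        exact hv (f v) ⟨(hf v hvM).2, hvP,
          (hPmem _).2 ⟨((hTmem _).1 (hf v hvM).1).1, fun _ => hfv⟩⟩
      · exact hv w ⟨hvw, hvP, (hPmem w).2 ⟨hwR, fun h => absurd h hwT⟩⟩
    · intro hv
      have hvT := (hTmem v).1 (hfT v hv)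
      refine ⟨⟨hR hvT.1, (hPmem v).2 ⟨hvT.1, fun _ => hv⟩⟩, ?_⟩
      rintro w ⟨hvw, _, hw⟩
      exact hvT.2 w ((hPmem w).1 hw).1 hvw
  refine ⟨P, Finset.sdiff_subset, ?_, ?_⟩
  · grind
  · rw [hsinks]
    refine Finset.card_image_le.trans (Finset.card_le_card fun v hv => ?_)
    have hvM := (hMmem v).1 hv
    have hfv : f v ∈ M.image f := Finset.mem_image_of_mem f hv
    have hvP : v ∈ P := (hPmem v).2 ⟨hvM.1, fun h => absurd h hvM.2.1⟩
    rw [mem_inN]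
    refine ⟨⟨Finset.mem_inter.2 ⟨hR hvM.1, hvP⟩, fun h => hvM.2.1 (hfT v h)⟩,
      f v, hfv, (hf v hv).2, hvP, ?_⟩
    exact (hPmem _).2 ⟨((hTmem _).1 (hf v hv).1).1, fun _ => hfv⟩

/-- If `P` avoids `S ∪ N⁻(S)` and omits, outside `S ∪ N⁻(S)`, only vertices all of whose arcs lead
to `S ∪ N⁻(S)`, then adding `S` to a quasi-kernel of `D[P]` gives a quasi-kernel of `D`. -/
theorem FinDigraph.quasiKernel_sinks_union (D : FinDigraph) (P Q : Finset ℕ)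
    (hP : P ⊆ D.verts \ (D.sinks ∪ D.inN D.sinks))
    (hout : ∀ v ∈ D.verts \ (D.sinks ∪ D.inN D.sinks), v ∉ P →
      ∀ w ∈ D.verts \ (D.sinks ∪ D.inN D.sinks), ¬ D.Adj v w)
    (hQ : (D.induce P).QuasiKernel Q) : D.QuasiKernel (D.sinks ∪ Q) := by
  obtain ⟨hQs, hQi, hQd⟩ := hQ
  have hQP : ∀ q ∈ Q, q ∈ P := fun q hq => (Finset.mem_inter.1 (hQs hq)).2
  have hPN : ∀ v ∈ P, v ∈ D.verts ∧ v ∉ D.sinks ∧ v ∉ D.inN D.sinks := by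
    intro v hv
    have := hP hv
    simp only [Finset.mem_sdiff, Finset.mem_union, not_or] at this
    exact this
  refine ⟨?_, ?_, ?_⟩
  · intro v hv
    rcases Finset.mem_union.1 hv with h | h
    · exact (mem_sinks.1 h).1
    · exact (hPN v (hQP v h)).1
  · intro u hu v hv huv hadj
    rcases Finset.mem_union.1 hu with h | h
    · exact (mem_sinks.1 h).2 v hadj
    · have huP := hPN u (hQP u h)
      rcases Finset.mem_union.1 hv with h' | h'
      · exact huP.2.2 (mem_inN.2 ⟨⟨huP.1, huP.2.1⟩, v, h', hadj⟩)
      · exact hQi u h v h' huv ⟨hadj, hQP u h, hQP v h'⟩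
  · intro v hv
    by_cases hvS : v ∈ D.sinks
    · exact Or.inl (Finset.mem_union_left _ hvS)
    by_cases hvN : v ∈ D.inN D.sinks
    · obtain ⟨_, s, hs, hvs⟩ := mem_inN.1 hvN
      exact Or.inr (Or.inl ⟨s, Finset.mem_union_left _ hs, hvs⟩)
    by_cases hvP : v ∈ P
    · rcases hQd v (Finset.mem_inter.2 ⟨hv, hvP⟩) with h | ⟨q, hq, h⟩ | ⟨w, q, hq, h, h'⟩
      · exact Or.inl (Finset.mem_union_right _ h)
      · exact Or.inr (Or.inl ⟨q, Finset.mem_union_right _ hq, h.1⟩)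
      · exact Or.inr (Or.inr ⟨w, q, Finset.mem_union_right _ hq, h.1, h'.1⟩)
    · obtain ⟨w, hvw⟩ : ∃ w, D.Adj v w := by
        by_contra! h
        exact hvS (mem_sinks.2 ⟨hv, h⟩)
      -- all out-neighbours of the deleted vertex `v` lie in `N⁻(S)`
      have hwS : w ∉ D.sinks := fun h => hvN (mem_inN.2 ⟨⟨hv, hvS⟩, w, h, hvw⟩)
      have hwN : w ∈ D.inN D.sinks := by
        by_contra hwN
        refine hout v ?_ hvP w ?_ hvw
        · simp [hv, hvS, hvN]
        · simp [(D.mem_of_adj v w hvw).2, hwS, hwN]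
      obtain ⟨_, s, hs, hws⟩ := mem_inN.1 hwN
      exact Or.inr (Or.inr ⟨w, s, Finset.mem_union_left _ hs, hvw, hws⟩)

/-- For a hereditary class `F` and `α ≥ 1/2`, every sink-free digraph in `F` has a quasi-kernel
of size at most `α·|V(D)|` iff every digraph in `F` has a quasi-kernel of size at most
`α·(|V(D)| + |S(D)| − |N⁻(S(D))|)`. -/
theorem stmt10 (F : Set FinDigraph) (hF : Hereditary F) (α : ℝ) (hα : 1 / 2 ≤ α) :
    (∀ D ∈ F, D.SinkFree →
        ∃ Q : Finset ℕ, D.QuasiKernel Q ∧ (Q.card : ℝ) ≤ α * D.verts.card) ↔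
      (∀ D ∈ F, ∃ Q : Finset ℕ, D.QuasiKernel Q ∧
          (Q.card : ℝ) ≤ α * ((D.verts.card : ℝ) + D.sinks.card - (D.inN D.sinks).card)) := by
  constructor
  · intro h D
    induction hn : D.verts.card using Nat.strong_induction_on generalizing D with
    | _ n ih =>
    intro hD
    subst hn
    by_cases hS : D.sinks = ∅
    · have hfree : D.SinkFree := by
        intro v hv
        by_contra! hv'
        have : v ∈ D.sinks := FinDigraph.mem_sinks.2 ⟨hv, hv'⟩
        simp [hS] at this
      obtain ⟨Q, hQ, hc⟩ := h D hD hfree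
      exact ⟨Q, hQ, by simpa [hS, FinDigraph.inN] using hc⟩
    have hSV : D.sinks ⊆ D.verts := fun v hv => (FinDigraph.mem_sinks.1 hv).1
    have hNV : D.inN D.sinks ⊆ D.verts := fun v hv => (FinDigraph.mem_inN.1 hv).1.1
    have hdisj : Disjoint D.sinks (D.inN D.sinks) :=
      Finset.disjoint_right.2 fun v hv => (FinDigraph.mem_inN.1 hv).1.2
    have hRc : (D.verts \ (D.sinks ∪ D.inN D.sinks)).card + D.sinks.card
        + (D.inN D.sinks).card = D.verts.card := by
      rw [add_assoc, ← Finset.card_union_of_disjoint hdisj]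
      exact Finset.card_sdiff_add_card_eq_card (Finset.union_subset hSV hNV)
    obtain ⟨P, hPR, hout, hPc⟩ :=
      D.exists_reduced_subset (D.verts \ (D.sinks ∪ D.inN D.sinks)) Finset.sdiff_subset
    have hSpos : 0 < D.sinks.card := Finset.card_pos.2 (Finset.nonempty_iff_ne_empty.2 hS)
    have hIc : (D.induce P).verts.card ≤ (D.verts \ (D.sinks ∪ D.inN D.sinks)).card :=
      Finset.card_le_card (Finset.inter_subset_right.trans hPR)
    obtain ⟨Q, hQ, hQc⟩ := ih (D.induce P).verts.card (by omega) (D.induce P) rfl (hF D hD P)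
    refine ⟨D.sinks ∪ Q, D.quasiKernel_sinks_union P Q hPR hout hQ, ?_⟩
    have hU : ((D.sinks ∪ Q).card : ℝ) ≤ D.sinks.card + Q.card := by
      exact_mod_cast Finset.card_union_le _ _
    have hα0 : 0 ≤ α := by linarith
    have hQR : (Q.card : ℝ) ≤ α * (D.verts \ (D.sinks ∪ D.inN D.sinks)).card := by
      refine hQc.trans (mul_le_mul_of_nonneg_left ?_ hα0)
      have h1 : ((D.induce P).verts.card : ℝ)
          ≤ (D.verts \ (D.sinks ∪ D.inN D.sinks)).card := by exact_mod_cast hIc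
      have h2 : ((D.induce P).sinks.card : ℝ)
          ≤ ((D.induce P).inN (D.induce P).sinks).card := by exact_mod_cast hPc
      linarith
    have hV : (D.verts.card : ℝ) = (D.verts \ (D.sinks ∪ D.inN D.sinks)).card
        + D.sinks.card + (D.inN D.sinks).card := by exact_mod_cast hRc.symm
    have hS2 : (D.sinks.card : ℝ) ≤ α * (2 * D.sinks.card) := by
      nlinarith [(Nat.cast_nonneg D.sinks.card : (0 : ℝ) ≤ D.sinks.card)]
    calc ((D.sinks ∪ Q).card : ℝ)
        ≤ α * (2 * D.sinks.card) + α * (D.verts \ (D.sinks ∪ D.inN D.sinks)).card := by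
          linarith
      _ = _ := by rw [hV]; ring
  · intro h D hD hfree
    have hS : D.sinks = ∅ := Finset.eq_empty_of_forall_notMem fun v hv =>
      have ⟨hvV, hv'⟩ := FinDigraph.mem_sinks.1 hv
      have ⟨w, hw⟩ := hfree v hvV
      hv' w hw
    obtain ⟨Q, hQ, hc⟩ := h D hD
    exact ⟨Q, hQ, by simpa [hS, FinDigraph.inN] using hc⟩
end

section
/- Every acyclic digraph D has a quasi-kernel of size at most (1/2)·(|V(D)| + |S(D)| − |N⁻(S(D))|). (Note that every nonempty finite acyclic digraph has a sink, so the sink-free case is vacuous.) -/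
/-- The set `S(D)` of sinks of the digraph with arc relation `A`. -/
def sinks {V : Type*} [Fintype V] (A : V → V → Prop) [DecidableRel A] : Finset V :=
  Finset.univ.filter (fun v => ∀ w, ¬ A v w)

/-- `N⁻(S)`: the set of vertices outside `S` having an arc to some vertex of `S`. -/
def inN {V : Type*} [Fintype V] [DecidableEq V] (A : V → V → Prop) [DecidableRel A]
    (S : Finset V) : Finset V :=
  (Finset.univ \ S).filter (fun v => ∃ s ∈ S, A v s)

/-- Every vertex set of a finite acyclic digraph induces a subgraph with a kernel. -/
lemma exists_kernel_on {V : Type*} [Fintype V] [DecidableEq V] (A : V → V → Prop)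
    [DecidableRel A] (hacyc : ∀ v : V, ¬ Relation.TransGen A v v) (C : Finset V) :
    ∃ K ⊆ C, Indep A K ∧ ∀ v ∈ C, v ∈ K ∨ ∃ q ∈ K, A v q := by
  induction C using Finset.strongInduction with
  | H C ih =>
    rcases C.eq_empty_or_nonempty with rfl | ⟨c, hc⟩
    · exact ⟨∅, by simp, by simp [Indep], by simp⟩
    · have : Std.Irrefl (flip (Relation.TransGen A)) := ⟨hacyc⟩
      have : IsTrans V (flip (Relation.TransGen A)) := ⟨fun _ _ _ h₁ h₂ => h₂.trans h₁⟩
      -- `s` is a sink of the subgraph induced by `C`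
      obtain ⟨s, hs, hmin⟩ := (Finite.wellFounded_of_trans_of_irrefl
        (flip (Relation.TransGen A))).has_min (C : Set V) ⟨c, hc⟩
      have hsink : ∀ w ∈ C, ¬ A s w := fun w hw h => hmin w hw (.single h)
      have hsC : s ∈ C := hs
      obtain ⟨K, hKC, hKi, hKa⟩ := ih (C.filter fun v => v ≠ s ∧ ¬ A v s)
        (Finset.filter_ssubset.2 ⟨s, hsC, by simp⟩)
      have hK : ∀ v ∈ K, v ∈ C ∧ v ≠ s ∧ ¬ A v s := fun v hv => by
        simpa using hKC hv
      refine ⟨insert s K, ?_, ?_, ?_⟩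
      · exact Finset.insert_subset hsC fun v hv => (hK v hv).1
      · intro u hu v hv huv
        rcases Finset.mem_insert.1 hu with rfl | hu' <;>
          rcases Finset.mem_insert.1 hv with rfl | hv'
        · exact absurd rfl huv
        · exact hsink v (hK v hv').1
        · exact (hK u hu').2.2
        · exact hKi u hu' v hv' huv
      · intro v hv
        by_cases h₁ : v = s
        · exact .inl (by simp [h₁])
        by_cases h₂ : A v s
        · exact .inr ⟨s, by simp, h₂⟩
        rcases hKa v (by simp [hv, h₁, h₂]) with h | ⟨q, hq, h⟩
        · exact .inl (Finset.mem_insert_of_mem h)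
        · exact .inr ⟨q, Finset.mem_insert_of_mem hq, h⟩

lemma mem_sinks_iff {V : Type*} [Fintype V] (A : V → V → Prop) [DecidableRel A] (v : V) :
    v ∈ sinks A ↔ ∀ w, ¬ A v w := by
  simp [sinks]

lemma mem_inN_iff {V : Type*} [Fintype V] [DecidableEq V] (A : V → V → Prop) [DecidableRel A]
    (S : Finset V) (v : V) : v ∈ inN A S ↔ v ∉ S ∧ ∃ s ∈ S, A v s := by
  simp [inN]

/-- Since the sinks absorb themselves and their in-neighbours, an independent set `X` of other
vertices completes them to a quasi-kernel as soon as each other vertex reaches `X` in at most two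
steps or has an arc to an in-neighbour of a sink. -/
lemma quasiKernel_union {V : Type*} [Fintype V] [DecidableEq V] (A : V → V → Prop)
    [DecidableRel A] (X : Finset V)
    (hX : ∀ v ∈ X, v ∉ sinks A ∧ v ∉ inN A (sinks A)) (hi : Indep A X)
    (habs : ∀ v, v ∉ sinks A → v ∉ inN A (sinks A) →
      v ∈ X ∨ (∃ q ∈ X, A v q) ∨ (∃ w, ∃ q ∈ X, A v w ∧ A w q) ∨
        ∃ w ∈ inN A (sinks A), A v w) :
    QuasiKernel A (sinks A ∪ X) := by
  constructor
  · intro u hu v hv huv h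
    rcases Finset.mem_union.1 hu with hu | hu
    · exact (mem_sinks_iff A u).1 hu v h
    rcases Finset.mem_union.1 hv with hv | hv
    · exact (hX u hu).2 ((mem_inN_iff A _ u).2 ⟨(hX u hu).1, v, hv, h⟩)
    · exact hi u hu v hv huv h
  · intro v
    by_cases hS : v ∈ sinks A
    · exact .inl (Finset.mem_union_left _ hS)
    by_cases hN : v ∈ inN A (sinks A)
    · obtain ⟨-, s, hs, h⟩ := (mem_inN_iff A _ v).1 hN
      exact .inr (.inl ⟨s, Finset.mem_union_left _ hs, h⟩)
    rcases habs v hS hN with h | ⟨q, hq, h⟩ | ⟨w, q, hq, h⟩ | ⟨w, hw, h⟩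
    · exact .inl (Finset.mem_union_right _ h)
    · exact .inr (.inl ⟨q, Finset.mem_union_right _ hq, h⟩)
    · exact .inr (.inr ⟨w, q, Finset.mem_union_right _ hq, h⟩)
    · obtain ⟨-, s, hs, h'⟩ := (mem_inN_iff A _ w).1 hw
      exact .inr (.inr ⟨w, s, Finset.mem_union_left _ hs, h, h'⟩)

/-- Every acyclic digraph `D` has a quasi-kernel of size at most
`(1/2)·(|V(D)| + |S(D)| − |N⁻(S(D))|)`. -/
theorem stmt11 {V : Type*} [Fintype V] [DecidableEq V] (A : V → V → Prop) [DecidableRel A]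
    (hacyc : ∀ v : V, ¬ Relation.TransGen A v v) :
    ∃ Q : Finset V, QuasiKernel A Q ∧
      (Q.card : ℝ) ≤ (1 / 2) *
        ((Fintype.card V : ℝ) + ((sinks A).card : ℝ) - ((inN A (sinks A)).card : ℝ)) := by
  obtain ⟨R, hR⟩ : ∃ R, R = Finset.univ \ (sinks A ∪ inN A (sinks A)) := ⟨_, rfl⟩
  have hmem : ∀ v, v ∈ R ↔ v ∉ sinks A ∧ v ∉ inN A (sinks A) := by
    intro v; simp [hR]
  have hdisj : Disjoint (sinks A) (inN A (sinks A)) :=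
    Finset.disjoint_left.2 fun v hv hv' => ((mem_inN_iff A _ v).1 hv').1 hv
  have hcard : R.card + ((sinks A).card + (inN A (sinks A)).card) = Fintype.card V := by
    rw [hR, ← Finset.card_union_of_disjoint hdisj,
      Finset.card_sdiff_add_card_eq_card (Finset.subset_univ _), Finset.card_univ]
  have hbound : ∀ X : Finset V, 2 * X.card ≤ R.card →
      ((sinks A ∪ X).card : ℝ) ≤ (1 / 2) *
        ((Fintype.card V : ℝ) + ((sinks A).card : ℝ) - ((inN A (sinks A)).card : ℝ)) := by
    intro X hX
    have h₁ : ((sinks A ∪ X).card : ℝ) ≤ (sinks A).card + X.card := by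
      exact_mod_cast Finset.card_union_le _ _
    have h₂ : (2 : ℝ) * X.card ≤ R.card := by exact_mod_cast hX
    have h₃ : (R.card : ℝ) + ((sinks A).card + (inN A (sinks A)).card) = Fintype.card V := by
      exact_mod_cast hcard
    linarith
  obtain ⟨K, hKR, hKi, hKa⟩ := exists_kernel_on A hacyc R
  obtain ⟨L, hLR, hLi, hLa⟩ := exists_kernel_on A hacyc (R \ K)
  have hL : L.card + K.card ≤ R.card := by
    rw [← Finset.card_sdiff_add_card_eq_card hKR]
    exact Nat.add_le_add_right (Finset.card_le_card hLR) _
  by_cases hK : 2 * K.card ≤ R.card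
  · refine ⟨sinks A ∪ K, quasiKernel_union A K (fun v hv => (hmem v).1 (hKR hv)) hKi ?_,
      hbound K hK⟩
    intro v h₁ h₂
    rcases hKa v ((hmem v).2 ⟨h₁, h₂⟩) with h | h
    · exact .inl h
    · exact .inr (.inl h)
  · refine ⟨sinks A ∪ L, quasiKernel_union A L
      (fun v hv => (hmem v).1 (Finset.mem_sdiff.1 (hLR hv)).1) hLi ?_, hbound L (by omega)⟩
    intro v h₁ h₂
    by_cases hvK : v ∈ K
    · obtain ⟨w, hw⟩ : ∃ w, A v w := by
        simpa [mem_sinks_iff] using h₁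
      by_cases hwN : w ∈ inN A (sinks A)
      · exact .inr (.inr (.inr ⟨w, hwN, hw⟩))
      have hwS : w ∉ sinks A := fun h => h₂ ((mem_inN_iff A _ v).2 ⟨h₁, w, h, hw⟩)
      have hvw : v ≠ w := by
        rintro rfl
        exact hacyc v (.single hw)
      have hwK : w ∉ K := fun h => hKi v hvK w h hvw hw
      rcases hLa w (Finset.mem_sdiff.2 ⟨(hmem w).2 ⟨hwS, hwN⟩, hwK⟩) with h | ⟨q, hq, h⟩
      · exact .inr (.inl ⟨w, h, hw⟩)
      · exact .inr (.inr (.inl ⟨w, q, hq, hw, h⟩))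
    · rcases hLa v (Finset.mem_sdiff.2 ⟨(hmem v).2 ⟨h₁, h₂⟩, hvK⟩) with h | h
      · exact .inl h
      · exact .inr (.inl h)
end

section
/- Every anti-claw-free digraph D has a quasi-kernel of size at most (1/2)·(|V(D)| + |S(D)| − |N⁻(S(D))|). -/
/-- A digraph is anti-claw-free if it has no induced subdigraph on four distinct vertices
`c, a, b, d` whose only arcs are `(a,c)`, `(b,c)`, `(d,c)`. -/
def AntiClawFree {V : Type*} (A : V → V → Prop) : Prop :=
  ¬ ∃ c a b d : V, a ≠ b ∧ a ≠ c ∧ a ≠ d ∧ b ≠ c ∧ b ≠ d ∧ c ≠ d ∧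
      A a c ∧ A b c ∧ A d c ∧
      ¬ A c a ∧ ¬ A c b ∧ ¬ A c d ∧
      ¬ A a b ∧ ¬ A b a ∧ ¬ A a d ∧ ¬ A d a ∧ ¬ A b d ∧ ¬ A d b

/-- The Chvátal–Lovász theorem, relative to a set `X` of vertices: `X` contains an independent set
that every vertex of `X` reaches within two steps. (The middle vertex of a path is not required to
lie in `X`.) -/
lemma exists_quasiKernel_on {V : Type*} [DecidableEq V] (A : V → V → Prop) (X : Finset V) :
    ∃ Q ⊆ X, Indep A Q ∧
      ∀ v ∈ X, v ∈ Q ∨ (∃ q ∈ Q, A v q) ∨ (∃ w : V, ∃ q ∈ Q, A v w ∧ A w q) := by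
  classical
  induction X using Finset.strongInduction with
  | H X ih =>
    rcases X.eq_empty_or_nonempty with rfl | ⟨v, hv⟩
    · exact ⟨∅, by simp, by simp [Indep], by simp⟩
    -- Delete `v` and its in-neighbours; `v` is added back unless it has an arc into the set found.
    obtain ⟨Q, hQX, hQi, hQ⟩ := ih (X.filter fun x => x ≠ v ∧ ¬ A x v)
      (Finset.filter_ssubset.2 ⟨v, hv, by simp⟩)
    have hmem : ∀ q ∈ Q, q ∈ X ∧ q ≠ v ∧ ¬ A q v := fun q hq => by simpa using hQX hq
    by_cases h : ∃ q ∈ Q, A v q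
    · obtain ⟨q, hq, hvq⟩ := h
      refine ⟨Q, fun x hx => (hmem x hx).1, hQi, fun x hx => ?_⟩
      by_cases hxv : x = v
      · subst hxv; exact Or.inr (Or.inl ⟨q, hq, hvq⟩)
      by_cases hA : A x v
      · exact Or.inr (Or.inr ⟨v, q, hq, hA, hvq⟩)
      · exact hQ x (by simp [hx, hxv, hA])
    · push Not at h
      refine ⟨insert v Q, ?_, ?_, fun x hx => ?_⟩
      · intro x hx
        rcases Finset.mem_insert.1 hx with rfl | hx
        exacts [hv, (hmem x hx).1]
      · intro a ha b hb hab
        rcases Finset.mem_insert.1 ha with rfl | ha' <;>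
          rcases Finset.mem_insert.1 hb with rfl | hb'
        exacts [absurd rfl hab, h b hb', (hmem a ha').2.2, hQi a ha' b hb' hab]
      · by_cases hxv : x = v
        · simp [hxv]
        by_cases hA : A x v
        · exact Or.inr (Or.inl ⟨v, by simp, hA⟩)
        · rcases hQ x (by simp [hx, hxv, hA]) with h1 | ⟨q, hq, h1⟩ | ⟨w, q, hq, h1⟩
          · exact Or.inl (by simp [h1])
          · exact Or.inr (Or.inl ⟨q, by simp [hq], h1⟩)
          · exact Or.inr (Or.inr ⟨w, q, by simp [hq], h1⟩)

/-- Every anti-claw-free digraph `D` has a quasi-kernel of size at most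
`(1/2)·(|V(D)| + |S(D)| − |N⁻(S(D))|)`. -/
theorem stmt12 {V : Type*} [Fintype V] [DecidableEq V] (A : V → V → Prop) [DecidableRel A]
    (hirr : Irreflexive A) (hacf : AntiClawFree A) :
    ∃ Q : Finset V, QuasiKernel A Q ∧
      (Q.card : ℝ) ≤ (1 / 2) *
        ((Fintype.card V : ℝ) + ((sinks A).card : ℝ) - ((inN A (sinks A)).card : ℝ)) := by
  classical
  obtain ⟨Q, hQ, hmin⟩ : ∃ Q, QuasiKernel A Q ∧ ∀ T, QuasiKernel A T → Q.card ≤ T.card := by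
    obtain ⟨Q₀, -, hi, hr⟩ := exists_quasiKernel_on A Finset.univ
    obtain ⟨Q, hQ, h⟩ := Finset.exists_min_image
      (Finset.univ.filter fun T => QuasiKernel A T) Finset.card
      ⟨Q₀, by simpa using ⟨hi, fun v => hr v (Finset.mem_univ v)⟩⟩
    exact ⟨Q, by simpa using hQ, fun T hT => h T (by simpa using hT)⟩
  have hne : ∀ {u v}, A u v → u ≠ v := fun h e => hirr _ (e ▸ h)
  have hind : ∀ u ∈ Q, ∀ v ∈ Q, ¬ A u v := fun u hu v hv h => hQ.1 u hu v hv (hne h) h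
  have hSQ : sinks A ⊆ Q := by
    intro s hs
    have hs' : ∀ w, ¬ A s w := by simpa [sinks] using hs
    rcases hQ.2 s with h | ⟨q, -, h⟩ | ⟨w, q, -, h, -⟩
    exacts [h, absurd h (hs' _), absurd h (hs' _)]
  have hinN : ∀ v ∈ inN A (sinks A), ∃ s ∈ sinks A, A v s := fun v hv =>
    (Finset.mem_filter.1 hv).2
  obtain ⟨Q', hQ'Q, hSQ', hdom, hmin'⟩ : ∃ Q' ⊆ Q, sinks A ⊆ Q' ∧
      (∀ v, (∃ q ∈ Q, A v q) → ∃ q ∈ Q', A v q) ∧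
      ∀ T ⊆ Q, sinks A ⊆ T → (∀ v, (∃ q ∈ Q, A v q) → ∃ q ∈ T, A v q) → Q'.card ≤ T.card := by
    obtain ⟨Q', h1, h2⟩ := Finset.exists_min_image
      (Q.powerset.filter fun T => sinks A ⊆ T ∧ ∀ v, (∃ q ∈ Q, A v q) → ∃ q ∈ T, A v q) Finset.card
      ⟨Q, Finset.mem_filter.2 ⟨by simp, hSQ, fun v h => h⟩⟩
    obtain ⟨h3, h4, h5⟩ := Finset.mem_filter.1 h1
    exact ⟨Q', Finset.mem_powerset.1 h3, h4, h5, fun T a b c =>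
      h2 T (Finset.mem_filter.2 ⟨Finset.mem_powerset.2 a, b, c⟩)⟩
  have hreach : ∀ v, v ∉ Q → (∃ q ∈ Q', A v q) ∨ ∃ w, ∃ q ∈ Q', A v w ∧ A w q := by
    intro v hv
    rcases hQ.2 v with h | h | ⟨w, q, hq, h1, h2⟩
    · exact absurd h hv
    · exact Or.inl (hdom v h)
    · obtain ⟨q', hq', h'⟩ := hdom w ⟨q, hq, h2⟩
      exact Or.inr ⟨w, q', hq', h1, h'⟩
  -- A vertex of `N` outside `N⁻(S)` seen only by `q`: otherwise `Q' \ {q}` contradicts minimality.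
  have hprivate : ∀ q ∈ Q', q ∉ sinks A →
      ∃ v, v ∉ inN A (sinks A) ∧ A v q ∧ ∀ u ∈ Q', A v u → u = q := by
    intro q hq hqS
    by_contra! hcon
    have := hmin' (Q'.erase q) ((Finset.erase_subset _ _).trans hQ'Q)
      (fun s hs => Finset.mem_erase.2 ⟨fun e => hqS (e ▸ hs), hSQ' hs⟩) ?_
    · exact absurd this (not_le.2 (Finset.card_erase_lt_of_mem hq))
    intro v hv
    obtain ⟨u, hu, hvu⟩ := hdom v hv
    by_cases huq : u = q
    · subst huq
      by_cases hvN : v ∈ inN A (sinks A)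
      · obtain ⟨s, hs, hvs⟩ := hinN v hvN
        exact ⟨s, Finset.mem_erase.2 ⟨fun e => hqS (e ▸ hs), hSQ' hs⟩, hvs⟩
      · obtain ⟨x, hx, hvx, hne'⟩ := hcon v hvN hvu
        exact ⟨x, Finset.mem_erase.2 ⟨hne', hx⟩, hvx⟩
    · exact ⟨u, Finset.mem_erase.2 ⟨huq, hu⟩, hvu⟩
  -- An out-neighbour `w` of `q` with an arc into `Q` would make `Q \ {q}` a quasi-kernel.
  have houter : ∀ q ∈ Q, q ∉ Q' → ∃ w, A q w ∧ ∀ u ∈ Q, ¬ A w u := by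
    intro q hq hqQ'
    obtain ⟨w, hw⟩ : ∃ w, A q w := by
      by_contra! h
      exact hqQ' (hSQ' (by simpa [sinks] using h))
    refine ⟨w, hw, fun u hu hwu => ?_⟩
    obtain ⟨u', hu', hwu'⟩ := hdom w ⟨u, hu, hwu⟩
    have hsub : ∀ x ∈ Q', x ∈ Q.erase q := fun x hx =>
      Finset.mem_erase.2 ⟨fun e => hqQ' (e ▸ hx), hQ'Q hx⟩
    have hqk : QuasiKernel A (Q.erase q) := by
      refine ⟨fun a ha b hb hab => hQ.1 a (Finset.mem_of_mem_erase ha) b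
        (Finset.mem_of_mem_erase hb) hab, fun v => ?_⟩
      by_cases hvq : v = q
      · subst hvq; exact Or.inr (Or.inr ⟨w, u', hsub u' hu', hw, hwu'⟩)
      by_cases hv : v ∈ Q
      · exact Or.inl (Finset.mem_erase.2 ⟨hvq, hv⟩)
      rcases hreach v hv with ⟨x, hx, h⟩ | ⟨y, x, hx, h⟩
      · exact Or.inr (Or.inl ⟨x, hsub x hx, h⟩)
      · exact Or.inr (Or.inr ⟨y, x, hsub x hx, h⟩)
    exact absurd (hmin _ hqk) (not_le.2 (Finset.card_erase_lt_of_mem hq))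
  -- If `q₁ ≠ q₂`, replacing both by their common out-neighbour `w` shrinks the quasi-kernel.
  have huniq : ∀ w, (∀ u ∈ Q, ¬ A w u) → ∀ q₁ ∈ Q, q₁ ∉ Q' → ∀ q₂ ∈ Q, q₂ ∉ Q' →
      A q₁ w → A q₂ w → q₁ = q₂ := by
    intro w hw q₁ h₁ h₁' q₂ h₂ h₂' ha₁ ha₂
    by_contra h12
    have honly : ∀ u ∈ Q, A u w → u = q₁ ∨ u = q₂ := by
      intro u hu hau
      by_contra! hu12
      exact hacf ⟨w, q₁, q₂, u, h12, hne ha₁, hu12.1.symm, hne ha₂, hu12.2.symm, (hne hau).symm,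
        ha₁, ha₂, hau, hw _ h₁, hw _ h₂, hw _ hu, hind _ h₁ _ h₂, hind _ h₂ _ h₁,
        hind _ h₁ _ hu, hind _ hu _ h₁, hind _ h₂ _ hu, hind _ hu _ h₂⟩
    have hmem : ∀ x, x ∈ insert w ((Q.erase q₁).erase q₂) ↔ x = w ∨ (x ≠ q₂ ∧ x ≠ q₁ ∧ x ∈ Q) := by
      intro x; simp
    have hsub : ∀ x ∈ Q', x ∈ insert w ((Q.erase q₁).erase q₂) := fun x hx =>
      (hmem x).2 (Or.inr ⟨fun e => h₂' (e ▸ hx), fun e => h₁' (e ▸ hx), hQ'Q hx⟩)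
    have hqk : QuasiKernel A (insert w ((Q.erase q₁).erase q₂)) := by
      refine ⟨fun a ha b hb hab => ?_, fun v => ?_⟩
      · rcases (hmem a).1 ha with rfl | ⟨ha2, ha1, ha'⟩ <;>
          rcases (hmem b).1 hb with rfl | ⟨hb2, hb1, hb'⟩
        · exact absurd rfl hab
        · exact hw b hb'
        · intro h
          rcases honly a ha' h with h | h
          exacts [ha1 h, ha2 h]
        · exact hind a ha' b hb'
      · by_cases hv1 : v = q₁
        · subst hv1; exact Or.inr (Or.inl ⟨w, by simp, ha₁⟩)
        by_cases hv2 : v = q₂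
        · subst hv2; exact Or.inr (Or.inl ⟨w, by simp, ha₂⟩)
        by_cases hv : v ∈ Q
        · exact Or.inl ((hmem v).2 (Or.inr ⟨hv2, hv1, hv⟩))
        rcases hreach v hv with ⟨x, hx, h⟩ | ⟨y, x, hx, h⟩
        · exact Or.inr (Or.inl ⟨x, hsub x hx, h⟩)
        · exact Or.inr (Or.inr ⟨y, x, hsub x hx, h⟩)
    have hcard := hmin _ hqk
    have hle := Finset.card_insert_le w ((Q.erase q₁).erase q₂)
    have he2 := Finset.card_erase_lt_of_mem (Finset.mem_erase.2 ⟨Ne.symm h12, h₂⟩)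
    have he1 := Finset.card_erase_lt_of_mem h₁
    omega
  have hex : ∀ q, ∃ v, q ∈ Q \ sinks A → v ∉ inN A (sinks A) ∧ v ∉ Q ∧
      (q ∈ Q' → A v q ∧ ∀ u ∈ Q', A v u → u = q) ∧ (q ∉ Q' → A q v ∧ ∀ u ∈ Q, ¬ A v u) := by
    intro q
    by_cases hq : q ∈ Q \ sinks A
    swap
    · exact ⟨q, fun h => absurd h hq⟩
    obtain ⟨hqQ, hqS⟩ := Finset.mem_sdiff.1 hq
    by_cases hq' : q ∈ Q'
    · obtain ⟨v, hvN, hvq, hv⟩ := hprivate q hq' hqS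
      exact ⟨v, fun _ => ⟨hvN, fun h => hind v h q hqQ hvq, fun _ => ⟨hvq, hv⟩,
        fun h => absurd hq' h⟩⟩
    · obtain ⟨w, hqw, hw⟩ := houter q hqQ hq'
      refine ⟨w, fun _ => ⟨fun h => ?_, fun h => hind q hqQ w h hqw, fun h => absurd h hq',
        fun _ => ⟨hqw, hw⟩⟩⟩
      obtain ⟨s, hs, hws⟩ := hinN w h
      exact hw s (hSQ hs) hws
  choose f hf using hex
  have hcard : (Q \ sinks A).card ≤ (Q ∪ inN A (sinks A))ᶜ.card := by
    refine Finset.card_le_card_of_injOn f (fun q hq => ?_) (fun a ha b hb hab => ?_)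
    · obtain ⟨h1, h2, -⟩ := hf q hq
      simp [h1, h2]
    · obtain ⟨-, -, a1, a2⟩ := hf a ha
      obtain ⟨-, -, b1, b2⟩ := hf b hb
      have haQ := (Finset.mem_sdiff.1 ha).1
      have hbQ := (Finset.mem_sdiff.1 hb).1
      rw [hab] at a1 a2
      by_cases ha' : a ∈ Q' <;> by_cases hb' : b ∈ Q'
      · exact (b1 hb').2 a ha' (a1 ha').1
      · exact absurd (a1 ha').1 ((b2 hb').2 a haQ)
      · exact absurd (b1 hb').1 ((a2 ha').2 b hbQ)
      · exact huniq _ (a2 ha').2 a haQ ha' b hbQ hb' (a2 ha').1 (b2 hb').1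
  have hdisj : Disjoint Q (inN A (sinks A)) := Finset.disjoint_left.2 fun v hv hvN => by
    obtain ⟨s, hs, h⟩ := hinN v hvN
    exact hind v hv s (hSQ hs) h
  have hsplit := Finset.card_sdiff_add_card_eq_card hSQ
  have hcompl := Finset.card_add_card_compl (Q ∪ inN A (sinks A))
  rw [Finset.card_union_of_disjoint hdisj] at hcompl
  have hfinal : 2 * Q.card + (inN A (sinks A)).card ≤ Fintype.card V + (sinks A).card := by omega
  have hreal : (2 : ℝ) * Q.card + (inN A (sinks A)).card ≤ Fintype.card V + (sinks A).card := by
    exact_mod_cast hfinal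
  exact ⟨Q, hQ, by linarith⟩
end

section
/- Every split digraph D has a quasi-kernel of size at most (2/3)·(|V(D)| + |S(D)| − |N⁻(S(D))|). -/
/-- In a semicomplete digraph on `M` with positive weights, a vertex of maximum weighted closed
in-degree is reached from everywhere in at most two steps, and the weight outside its closed
in-neighbourhood is at most half of the total. -/
lemma exists_king_pos {V : Type*} [DecidableEq V] (A : V → V → Prop) [DecidableRel A]
    (M : Finset V) (hM : M.Nonempty) (hs : ∀ u ∈ M, ∀ v ∈ M, u ≠ v → A u v ∨ A v u)
    (w : V → ℕ) (hw : ∀ u, 0 < w u) :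
    ∃ v ∈ M, (∀ u ∈ M, u = v ∨ A u v ∨ ∃ x ∈ M, A u x ∧ A x v) ∧
      2 * ∑ u ∈ M with (u ≠ v ∧ ¬ A u v), w u ≤ ∑ u ∈ M, w u := by
  obtain ⟨v, hv, hmax⟩ := M.exists_max_image
    (fun v => ∑ u ∈ M with (u = v ∨ A u v), w u) hM
  have hsplit : ∀ v, ∑ u ∈ M with (u = v ∨ A u v), w u
      + ∑ u ∈ M with (u ≠ v ∧ ¬ A u v), w u = ∑ u ∈ M, w u := by
    intro v
    rw [← Finset.sum_filter_add_sum_filter_not M (fun u => u = v ∨ A u v)]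
    simp only [not_or, ne_eq]
  refine ⟨v, hv, ?_, ?_⟩
  · intro u hu
    by_contra! hcon
    obtain ⟨h1, h2, h3⟩ := hcon
    have hvu : A v u := (hs u hu v hv h1).resolve_left h2
    -- an unreached `u` dominates nothing in `N⁻[v]`, so `N⁻[u]` contains `N⁻[v] ∪ {u}`
    have hlt : ∑ x ∈ M with (x = v ∨ A x v), w x < ∑ x ∈ M with (x = u ∨ A x u), w x := by
      apply Finset.sum_lt_sum_of_subset (i := u)
      · intro x hx
        simp only [Finset.mem_filter] at hx ⊢
        refine ⟨hx.1, ?_⟩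
        by_cases hxu : x = u
        · exact Or.inl hxu
        · right
          rcases hx.2 with rfl | hxv
          · exact hvu
          · exact (hs x hx.1 u hu hxu).resolve_right fun h => h3 x hx.1 h hxv
      · simp [hu]
      · simp [h1, h2]
      · exact hw u
      · intros; exact Nat.zero_le _
    exact absurd (hmax u hu) (not_le.mpr hlt)
  · -- the weighted sum of the closed in-degrees is at least half of the squared total weight
    have hdouble : (∑ u ∈ M, w u) * (∑ u ∈ M, w u) ≤
        2 * ∑ y ∈ M, w y * ∑ u ∈ M with (u = y ∨ A u y), w u := by
      have e1 : ∑ y ∈ M, w y * ∑ u ∈ M with (u = y ∨ A u y), w u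
          = ∑ y ∈ M, ∑ u ∈ M, if (u = y ∨ A u y) then w y * w u else 0 := by
        refine Finset.sum_congr rfl fun y _ => ?_
        rw [Finset.mul_sum, Finset.sum_filter]
      have e2 : ∑ y ∈ M, ∑ u ∈ M, (if (u = y ∨ A u y) then w y * w u else 0)
          = ∑ y ∈ M, ∑ u ∈ M, if (y = u ∨ A y u) then w u * w y else 0 :=
        Finset.sum_comm
      rw [two_mul, e1]
      nth_rewrite 2 [e2]
      rw [← Finset.sum_add_distrib, Finset.sum_mul_sum]
      refine Finset.sum_le_sum fun y hy => ?_
      rw [← Finset.sum_add_distrib]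
      refine Finset.sum_le_sum fun u hu => ?_
      have h : (u = y ∨ A u y) ∨ (y = u ∨ A y u) := by
        by_cases huy : u = y
        · exact Or.inl (Or.inl huy)
        · rcases hs u hu y hy huy with h | h
          · exact Or.inl (Or.inr h)
          · exact Or.inr (Or.inr h)
      rw [mul_comm (w u) (w y)]
      rcases h with h | h
      · rw [if_pos h]; exact Nat.le_add_right _ _
      · rw [if_pos h]; exact Nat.le_add_left _ _
    have hle : ∑ y ∈ M, w y * ∑ u ∈ M with (u = y ∨ A u y), w u ≤
        (∑ u ∈ M, w u) * ∑ u ∈ M with (u = v ∨ A u v), w u := by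
      rw [Finset.sum_mul]
      exact Finset.sum_le_sum fun y hy => Nat.mul_le_mul_left _ (hmax y hy)
    have hpos : 0 < ∑ u ∈ M, w u := Finset.sum_pos (fun u _ => hw u) hM
    have hhalf : ∑ u ∈ M, w u ≤ 2 * ∑ u ∈ M with (u = v ∨ A u v), w u := by
      refine Nat.le_of_mul_le_mul_left ?_ hpos
      calc _ ≤ _ := hdouble
        _ ≤ 2 * ((∑ u ∈ M, w u) * ∑ u ∈ M with (u = v ∨ A u v), w u) :=
          Nat.mul_le_mul_left _ hle
        _ = _ := by ring
    have := hsplit v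
    omega

/-- The weighted king lemma, where the weight of `u ∈ M` is the number of `x ∈ J` attached to `u`
by `g`. These weights may vanish, so `exists_king_pos` is applied to a perturbation of them. -/
lemma exists_king_s13 {V : Type*} [DecidableEq V] (A : V → V → Prop) [DecidableRel A]
    (M : Finset V) (hM : M.Nonempty) (hs : ∀ u ∈ M, ∀ v ∈ M, u ≠ v → A u v ∨ A v u)
    (J : Finset V) (g : V → V) (hg : ∀ x ∈ J, g x ∈ M) :
    ∃ v ∈ M, (∀ u ∈ M, u = v ∨ A u v ∨ ∃ x ∈ M, A u x ∧ A x v) ∧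
      2 * (J.filter (fun x => g x ≠ v ∧ ¬ A (g x) v)).card ≤ J.card := by
  -- the factor `#M + 1` makes the total perturbation, `#M`, too small to matter
  obtain ⟨v, hv, hking, hhalf⟩ := exists_king_pos A M hM hs
    (fun u => (M.card + 1) * (J.filter (fun x => g x = u)).card + 1) (fun u => Nat.succ_pos _)
  refine ⟨v, hv, hking, ?_⟩
  have hJ : J.card = ∑ u ∈ M, (J.filter (fun x => g x = u)).card :=
    Finset.card_eq_sum_card_fiberwise hg
  have hU : (J.filter (fun x => g x ≠ v ∧ ¬ A (g x) v)).card
      = ∑ u ∈ M with (u ≠ v ∧ ¬ A u v), (J.filter (fun x => g x = u)).card := by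
    rw [Finset.card_eq_sum_card_fiberwise (f := g)
      (t := M.filter (fun u => u ≠ v ∧ ¬ A u v))]
    · refine Finset.sum_congr rfl fun u hu => ?_
      congr 1
      ext x
      simp only [Finset.mem_filter] at hu ⊢
      constructor
      · rintro ⟨⟨h1, -⟩, h2⟩; exact ⟨h1, h2⟩
      · rintro ⟨h1, rfl⟩; exact ⟨⟨h1, hu.2⟩, rfl⟩
    · intro x hx
      simp only [Finset.coe_filter, Set.mem_ofPred_eq] at hx ⊢
      exact ⟨hg x hx.1, hx.2⟩
  simp only [Finset.sum_add_distrib, ← Finset.mul_sum, Finset.sum_const, smul_eq_mul, mul_one]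
    at hhalf
  rw [← hJ, ← hU] at hhalf
  by_contra! hlt
  have : (M.card + 1) * (J.card + 1) ≤
      (M.card + 1) * (2 * (J.filter (fun x => g x ≠ v ∧ ¬ A (g x) v)).card) :=
    Nat.mul_le_mul_left _ hlt
  nlinarith

/-- A set `{v} ∪ T` is independent when `v` is a clique vertex without arc to the independent part
and `T` consists of vertices of the independent part without arc to `v`. -/
lemma indep_insert {V : Type*} [DecidableEq V] {A : V → V → Prop} {K : Finset V}
    (hsplit : IsSplit A K) {v : V} {T : Finset V} (hT : ∀ x ∈ T, x ∉ K ∧ ¬ A x v)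
    (hv : ∀ x, x ∉ K → ¬ A v x) : Indep A (insert v T) := by
  intro a ha b hb hab
  rw [Finset.mem_insert] at ha hb
  rcases ha with rfl | ha <;> rcases hb with rfl | hb
  · exact absurd rfl hab
  · exact hv _ (hT _ hb).1
  · exact (hT _ ha).2
  · exact hsplit.2 a (hT _ ha).1 b (hT _ hb).1 hab

/-- A sink in the clique part is reached from every non-sink in at most two steps. -/
lemma quasiKernel_sinks {V : Type*} [Fintype V] {A : V → V → Prop}
    [DecidableRel A] {K : Finset V} (hirr : ∀ x, ¬ A x x) (hsplit : IsSplit A K)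
    {z : V} (hz : z ∈ K) (hzs : z ∈ sinks A) : QuasiKernel A (sinks A) := by
  have hz' : ∀ w, ¬ A z w := by simpa [sinks] using hzs
  have key : ∀ u ∈ K, u ≠ z → A u z := fun u hu huz =>
    (hsplit.1 u hu z hz huz).resolve_right (hz' u)
  constructor
  · intro u hu v _ _
    simp only [sinks, Finset.mem_filter] at hu
    exact hu.2 v
  · intro x
    by_cases hx : x ∈ sinks A
    · exact Or.inl hx
    right
    by_cases hxK : x ∈ K
    · exact Or.inl ⟨z, hzs, key x hxK (fun h => hx (h ▸ hzs))⟩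
    · have : ∃ w, A x w := by simpa [sinks] using hx
      obtain ⟨w, hw⟩ := this
      have hwK : w ∈ K := by
        by_contra hwK
        exact hsplit.2 x hxK w hwK (fun h => hirr x (by rw [← h] at hw; exact hw)) hw
      by_cases hwz : w = z
      · exact Or.inl ⟨z, hzs, hwz ▸ hw⟩
      · exact Or.inr ⟨w, z, hzs, hw, key w hwK hwz⟩

/-- The quasi-kernel inside the independent part: everything outside it either has an arc into it
or an arc to `K₁`, all of whose vertices have an arc into it. -/
lemma quasiKernel_indep {V : Type*} {A : V → V → Prop} {K K₁ Q : Finset V}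
    (hsplit : IsSplit A K) (hQ : ∀ x ∈ Q, x ∉ K)
    (hK₁ : ∀ u ∈ K₁, ∃ q ∈ Q, A u q)
    (hM : ∀ u ∈ K, u ∉ K₁ → ∃ w ∈ K₁, A u w)
    (hI : ∀ x, x ∉ K → x ∉ Q → ∃ w ∈ K₁, A x w) :
    QuasiKernel A Q := by
  refine ⟨fun u hu v hv huv => hsplit.2 u (hQ u hu) v (hQ v hv) huv, fun x => ?_⟩
  by_cases hxQ : x ∈ Q
  · exact Or.inl hxQ
  right
  have step : (∃ w ∈ K₁, A x w) → ∃ w, ∃ q ∈ Q, A x w ∧ A w q := by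
    rintro ⟨w, hw, hxw⟩
    obtain ⟨q, hq, hwq⟩ := hK₁ w hw
    exact ⟨w, q, hq, hxw, hwq⟩
  by_cases hxK : x ∈ K
  · by_cases hx : x ∈ K₁
    · exact Or.inl (hK₁ x hx)
    · exact Or.inr (step (hM x hxK hx))
  · exact Or.inr (step (hI x hxK hxQ))

/-- The quasi-kernel formed by a king `v` of `M` and those members of a set `T` in the independent
part that have no arc to `v`. Clique vertices outside `M` are required to have an arc into `T`, and
vertices outside the clique to lie in `T` or to have an arc into `N⁻[v]`. A member of `T` that is
dropped has an arc to `v`, so a clique vertex with an arc to it still reaches `v` in two steps. -/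
lemma quasiKernel_king {V : Type*} [DecidableEq V] {A : V → V → Prop} [DecidableRel A]
    {K M T : Finset V} (hsplit : IsSplit A K) {v : V} (hv : ∀ x, x ∉ K → ¬ A v x)
    (hT : ∀ x ∈ T, x ∉ K)
    (hM : ∀ u ∈ M, u = v ∨ A u v ∨ ∃ x, A u x ∧ A x v)
    (hK : ∀ u ∈ K, u ∉ M → ∃ q ∈ T, A u q)
    (hI : ∀ x, x ∉ K → x ∈ T ∨ ∃ y, A x y ∧ (y = v ∨ A y v)) :
    QuasiKernel A (insert v (T.filter (fun x => ¬ A x v))) := by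
  constructor
  · refine indep_insert hsplit (fun x hx => ?_) hv
    rw [Finset.mem_filter] at hx
    exact ⟨hT x hx.1, hx.2⟩
  intro x
  have hvQ := Finset.mem_insert_self v (T.filter (fun x => ¬ A x v))
  have hTQ : ∀ y ∈ T, ¬ A y v → y ∈ insert v (T.filter (fun x => ¬ A x v)) := fun y hy hyv =>
    Finset.mem_insert_of_mem (Finset.mem_filter.mpr ⟨hy, hyv⟩)
  by_cases hxM : x ∈ M
  · rcases hM x hxM with rfl | h | ⟨y, h1, h2⟩
    · exact Or.inl hvQ
    · exact Or.inr (Or.inl ⟨v, hvQ, h⟩)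
    · exact Or.inr (Or.inr ⟨y, v, hvQ, h1, h2⟩)
  by_cases hxK : x ∈ K
  · obtain ⟨q, hq, hxq⟩ := hK x hxK hxM
    by_cases hqv : A q v
    · exact Or.inr (Or.inr ⟨q, v, hvQ, hxq, hqv⟩)
    · exact Or.inr (Or.inl ⟨q, hTQ q hq hqv, hxq⟩)
  · rcases hI x hxK with h | ⟨y, h1, rfl | h2⟩
    · by_cases hxv : A x v
      · exact Or.inr (Or.inl ⟨v, hvQ, hxv⟩)
      · exact Or.inl (hTQ x h hxv)
    · exact Or.inr (Or.inl ⟨y, hvQ, h1⟩)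
    · exact Or.inr (Or.inr ⟨y, v, hvQ, h1, h2⟩)

/-- The quasi-kernel containing a king `v` of the set `K₀` of clique vertices with arcs neither to
the independent part nor to `K₁`: all of `K₁` has an arc to `v`, so whatever has an
arc to `K₁` reaches `v` in two steps. The remaining vertices of the independent part lie in `T`. -/
lemma quasiKernel_core {V : Type*} [DecidableEq V] {A : V → V → Prop} [DecidableRel A]
    {K K₁ T : Finset V} (hsplit : IsSplit A K) (hK₁ : K₁ ⊆ K) {v : V} (hvK : v ∈ K)
    (hvK₁ : v ∉ K₁) (hv : ∀ x, x ∉ K → ¬ A v x) (hv' : ∀ x ∈ K₁, ¬ A v x)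
    (hT : ∀ x ∈ T, x ∉ K)
    (hcore : ∀ u ∈ K, u ∉ K₁ → (∀ x ∈ K₁, ¬ A u x) → u = v ∨ A u v ∨ ∃ x, A u x ∧ A x v)
    (hI : ∀ x, x ∉ K → x ∈ T ∨ ∃ y ∈ K₁, A x y) :
    QuasiKernel A (insert v (T.filter (fun x => ¬ A x v))) := by
  have hdom : ∀ u ∈ K₁, A u v := fun u hu =>
    (hsplit.1 u (hK₁ hu) v hvK (fun h => hvK₁ (h ▸ hu))).resolve_right (hv' u hu)
  refine quasiKernel_king (M := K) hsplit hv hT (fun u hu => ?_) (fun u hu h => absurd hu h)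
    (fun x hx => (hI x hx).imp_right fun ⟨y, hy, hxy⟩ => ⟨y, hxy, Or.inr (hdom y hy)⟩)
  by_cases huo : u ∈ K₁
  · exact Or.inr (Or.inl (hdom u huo))
  by_cases h : ∀ x ∈ K₁, ¬ A u x
  · exact hcore u hu huo h
  · push Not at h
    obtain ⟨x, hx, hux⟩ := h
    exact Or.inr (Or.inr ⟨x, hux, hdom x hx⟩)

/-- The bound with denominators cleared and without subtraction. -/
lemma exists_quasiKernel_nat {V : Type*} [Fintype V] [DecidableEq V] (A : V → V → Prop)
    [DecidableRel A] (hirr : ∀ x, ¬ A x x) (K : Finset V) (hsplit : IsSplit A K) :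
    ∃ Q : Finset V, QuasiKernel A Q ∧
      3 * Q.card + 2 * (inN A (sinks A)).card ≤ 2 * (Fintype.card V + (sinks A).card) := by
  classical
  set S := sinks A with hS
  have memS : ∀ x, x ∈ S ↔ ∀ w, ¬ A x w := by intro x; simp [hS, sinks]
  set N₁ := inN A S with hN₁
  have memN₁ : ∀ x, x ∈ N₁ ↔ ∃ s ∈ S, A x s := by
    intro x
    simp only [hN₁, inN, Finset.mem_filter, Finset.mem_sdiff, Finset.mem_univ, true_and,
      and_iff_right_iff_imp]
    rintro ⟨s, -, h⟩ hx
    exact (memS x).1 hx s h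
  have hIK : ∀ x, x ∉ K → ∀ w, A x w → w ∈ K := by
    intro x hx w hw
    by_contra hwK
    exact hsplit.2 x hx w hwK (fun h => hirr x (by rw [← h] at hw; exact hw)) hw
  by_cases hsink : ∃ z ∈ K, z ∈ S
  · obtain ⟨z, hz, hzs⟩ := hsink
    refine ⟨S, quasiKernel_sinks hirr hsplit hz hzs, ?_⟩
    have hdisj : Disjoint S N₁ := by
      rw [Finset.disjoint_left]
      intro x hx hx'
      obtain ⟨s, -, h⟩ := (memN₁ x).1 hx'
      exact (memS x).1 hx s h
    have := Finset.card_le_univ (S ∪ N₁)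
    rw [Finset.card_union_of_disjoint hdisj] at this
    omega
  push Not at hsink
  have hSK : ∀ x ∈ S, x ∉ K := fun x hx hxK => hsink x hxK hx
  set K₁ := K.filter (fun u => ∃ x, x ∉ K ∧ A u x) with hK₁
  set M := K \ K₁ with hM
  set J := Kᶜ \ S with hJ
  set I' := J.filter (fun x => ∀ w, A x w → w ∈ M) with hI'
  have memJ : ∀ x, x ∈ J ↔ x ∉ K ∧ x ∉ S := by intro x; simp [hJ]
  have memI' : ∀ x, x ∈ I' ↔ x ∈ J ∧ ∀ w, A x w → w ∈ M := by intro x; simp [hI']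
  have memK₁ : ∀ x, x ∈ K₁ ↔ x ∈ K ∧ ∃ y, y ∉ K ∧ A x y := by intro x; simp [hK₁]
  have memM : ∀ x, x ∈ M ↔ x ∈ K ∧ x ∉ K₁ := by intro x; simp [hM]
  have hMI : ∀ v ∈ M, ∀ x, x ∉ K → ¬ A v x := by
    intro v hv x hx hvx
    rw [memM] at hv
    exact hv.2 ((memK₁ v).2 ⟨hv.1, x, hx, hvx⟩)
  have hK₁K : K₁ ⊆ K := Finset.filter_subset _ _
  have hN₁K₁ : N₁ ⊆ K₁ := by
    intro u hu
    obtain ⟨s, hs, hus⟩ := (memN₁ u).1 hu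
    refine (memK₁ u).2 ⟨?_, s, hSK s hs, hus⟩
    by_contra huK
    exact hSK s hs (hIK u huK s hus)
  have hI'J : I' ⊆ J := Finset.filter_subset _ _
  have hJnot : ∀ x ∈ J, x ∉ I' → ∃ w ∈ K₁, A x w := by
    intro x hx hxI
    have : ¬ ∀ w, A x w → w ∈ M := fun h => hxI ((memI' x).2 ⟨hx, h⟩)
    push Not at this
    obtain ⟨w, hw, hwM⟩ := this
    refine ⟨w, ?_, hw⟩
    by_contra hwK
    exact hwM ((memM w).2 ⟨hIK x ((memJ x).1 hx).1 w hw, hwK⟩)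
  have hIrest : ∀ x, x ∉ K → x ∈ S ∪ I' ∨ ∃ w ∈ K₁, A x w := by
    intro x hx
    by_cases hxS : x ∈ S
    · exact Or.inl (Finset.mem_union_left _ hxS)
    by_cases hxI : x ∈ I'
    · exact Or.inl (Finset.mem_union_right _ hxI)
    · exact Or.inr (hJnot x ((memJ x).2 ⟨hx, hxS⟩) hxI)
  have hf : ∀ u, ∃ x, u ∈ K₁ → x ∉ K ∧ A u x := by
    intro u
    by_cases hu : u ∈ K₁
    · obtain ⟨x, hx⟩ := ((memK₁ u).1 hu).2
      exact ⟨x, fun _ => hx⟩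
    · exact ⟨u, fun h => absurd h hu⟩
  choose f hf using hf
  have hg : ∀ x, ∃ w, x ∈ I' → A x w ∧ w ∈ M := by
    intro x
    by_cases hx : x ∈ I'
    · have hxS := ((memJ x).1 (hI'J hx)).2
      rw [memS] at hxS
      push Not at hxS
      obtain ⟨w, hw⟩ := hxS
      exact ⟨w, fun _ => ⟨hw, ((memI' x).1 hx).2 w hw⟩⟩
    · exact ⟨x, fun h => absurd h hx⟩
  choose g hg using hg
  set F := (K₁ \ N₁).image f with hF
  have hFJ : F ⊆ J := by
    intro x hx
    obtain ⟨u, hu, rfl⟩ := Finset.mem_image.1 hx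
    rw [Finset.mem_sdiff] at hu
    refine (memJ _).2 ⟨(hf u hu.1).1, fun h => hu.2 ?_⟩
    exact (memN₁ u).2 ⟨_, h, (hf u hu.1).2⟩
  have hK₁out : ∀ u ∈ K₁, ∃ q, (q ∈ S ∨ q ∈ F) ∧ A u q := by
    intro u hu
    by_cases huN : u ∈ N₁
    · obtain ⟨s, hs, hus⟩ := (memN₁ u).1 huN
      exact ⟨s, Or.inl hs, hus⟩
    · exact ⟨f u, Or.inr (Finset.mem_image_of_mem f (Finset.mem_sdiff.2 ⟨hu, huN⟩)),
        (hf u hu).2⟩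
  -- the partition of the vertex set into `S`, `N₁`, `K₁ \ N₁`, `M`, `J \ I'` and `I'`
  have c1 : K.card + Kᶜ.card = Fintype.card V := Finset.card_add_card_compl K
  have c2 : M.card + K₁.card = K.card := Finset.card_sdiff_add_card_eq_card hK₁K
  have c3 : (K₁ \ N₁).card + N₁.card = K₁.card := Finset.card_sdiff_add_card_eq_card hN₁K₁
  have c4 : J.card + S.card = Kᶜ.card := Finset.card_sdiff_add_card_eq_card
    (fun x hx => Finset.mem_compl.2 (hSK x hx))
  have c5 : (J \ I').card + I'.card = J.card := Finset.card_sdiff_add_card_eq_card hI'J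
  have c6 : (F \ I').card + (F ∩ I').card = F.card := Finset.card_sdiff_add_card_inter F I'
  have c7 : F.card ≤ (K₁ \ N₁).card := Finset.card_image_le
  have c8 : (F \ I').card ≤ (J \ I').card :=
    Finset.card_le_card (Finset.sdiff_subset_sdiff hFJ le_rfl)
  have hMs : ∀ u ∈ M, ∀ v ∈ M, u ≠ v → A u v ∨ A v u := fun u hu v hv =>
    hsplit.1 u ((memM u).1 hu).1 v ((memM v).1 hv).1
  -- given by a king `v` of `M`, with `U` the part of `I'` that `g` does not lead into `N⁻[v]`
  have hking : M.Nonempty → ∃ Q : Finset V, QuasiKernel A Q ∧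
      2 * Q.card ≤ 2 + 2 * S.card + 2 * (J \ I').card + I'.card + 2 * (F ∩ I').card := by
    intro hMne
    obtain ⟨v, hv, hserf, hhalf⟩ := exists_king_s13 A M hMne hMs I' g (fun x hx => (hg x hx).2)
    set U := I'.filter (fun x => g x ≠ v ∧ ¬ A (g x) v) with hU
    set T := S ∪ (J \ I') ∪ U ∪ (F ∩ I') with hT
    refine ⟨_, quasiKernel_king (M := M) (T := T) hsplit (hMI v hv) ?_ ?_ ?_ ?_, ?_⟩
    · intro x hx
      have hxSJ : x ∈ S ∨ x ∈ J := by
        simp only [hT, hU, Finset.mem_union, Finset.mem_sdiff, Finset.mem_filter,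
          Finset.mem_inter] at hx
        rcases hx with ((h | h) | h) | h
        · exact Or.inl h
        · exact Or.inr h.1
        · exact Or.inr (hI'J h.1)
        · exact Or.inr (hI'J h.2)
      rcases hxSJ with h | h
      · exact hSK x h
      · exact ((memJ x).1 h).1
    · intro u hu
      rcases hserf u hu with h | h | ⟨x, -, h⟩
      · exact Or.inl h
      · exact Or.inr (Or.inl h)
      · exact Or.inr (Or.inr ⟨x, h⟩)
    · intro u huK huM
      have hu : u ∈ K₁ := by
        by_contra h
        exact huM ((memM u).2 ⟨huK, h⟩)
      obtain ⟨q, hq, huq⟩ := hK₁out u hu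
      refine ⟨q, ?_, huq⟩
      simp only [hT, Finset.mem_union, Finset.mem_sdiff, Finset.mem_inter]
      rcases hq with h | h
      · exact Or.inl (Or.inl (Or.inl h))
      · by_cases hqI : q ∈ I'
        · exact Or.inr ⟨h, hqI⟩
        · exact Or.inl (Or.inl (Or.inr ⟨hFJ h, hqI⟩))
    · intro x hxK
      simp only [hT, Finset.mem_union, Finset.mem_sdiff]
      by_cases hxS : x ∈ S
      · exact Or.inl (Or.inl (Or.inl (Or.inl hxS)))
      by_cases hxI : x ∈ I'
      · by_cases hxU : x ∈ U
        · exact Or.inl (Or.inl (Or.inr hxU))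
        · refine Or.inr ⟨g x, (hg x hxI).1, ?_⟩
          by_contra! h
          exact hxU (Finset.mem_filter.2 ⟨hxI, h⟩)
      · exact Or.inl (Or.inl (Or.inl (Or.inr ⟨(memJ x).2 ⟨hxK, hxS⟩, hxI⟩)))
    · have h1 := Finset.card_insert_le v (T.filter (fun x => ¬ A x v))
      have h2 := Finset.card_filter_le T (fun x => ¬ A x v)
      have h3 : T.card ≤ _ := Finset.card_union_le (S ∪ (J \ I') ∪ U) (F ∩ I')
      have h4 := Finset.card_union_le (S ∪ (J \ I')) U
      have h5 := Finset.card_union_le S (J \ I')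
      omega
  by_cases hcore : ∀ u ∈ M, ∃ w ∈ K₁, A u w
  · have hQ₁ : QuasiKernel A (S ∪ I' ∪ (F \ I')) := by
      refine quasiKernel_indep (K₁ := K₁) hsplit ?_ ?_ ?_ ?_
      · intro x hx
        simp only [Finset.mem_union, Finset.mem_sdiff] at hx
        rcases hx with (h | h) | h
        · exact hSK x h
        · exact ((memJ x).1 (hI'J h)).1
        · exact ((memJ x).1 (hFJ h.1)).1
      · intro u hu
        obtain ⟨q, hq, huq⟩ := hK₁out u hu
        refine ⟨q, ?_, huq⟩
        simp only [Finset.mem_union, Finset.mem_sdiff]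
        tauto
      · exact fun u hu hu' => hcore u ((memM u).2 ⟨hu, hu'⟩)
      · intro x hx hxQ
        refine (hIrest x hx).resolve_left fun h => hxQ (Finset.mem_union_left _ h)
    have hc₁ : (S ∪ I' ∪ (F \ I')).card ≤ S.card + I'.card + (F \ I').card := by
      have h1 := Finset.card_union_le (S ∪ I') (F \ I')
      have h2 := Finset.card_union_le S I'
      omega
    by_cases hMne : M.Nonempty
    · obtain ⟨Q, hQ, hQc⟩ := hking hMne
      have hMpos := hMne.card_pos
      by_cases hle : 3 * Q.card + 2 * N₁.card ≤ 2 * (Fintype.card V + S.card)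
      · exact ⟨Q, hQ, hle⟩
      · exact ⟨_, hQ₁, by omega⟩
    · have hI'0 : I'.card = 0 := by
        rw [Finset.card_eq_zero, Finset.eq_empty_iff_forall_notMem]
        exact fun x hx => hMne ⟨_, (hg x hx).2⟩
      exact ⟨_, hQ₁, by omega⟩
  · push Not at hcore
    set K₀ := M.filter (fun u => ∀ w ∈ K₁, ¬ A u w) with hK₀
    have memK₀ : ∀ x, x ∈ K₀ ↔ x ∈ M ∧ ∀ w ∈ K₁, ¬ A x w := by intro x; simp [hK₀]
    have hK₀ne : K₀.Nonempty := by
      obtain ⟨u, hu, h⟩ := hcore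
      exact ⟨u, (memK₀ u).2 ⟨hu, h⟩⟩
    obtain ⟨v, hv, hserf, -⟩ := exists_king_s13 A K₀ hK₀ne
      (fun u hu v hv => hMs u ((memK₀ u).1 hu).1 v ((memK₀ v).1 hv).1) ∅ id (by simp)
    obtain ⟨hvM, hvK₁⟩ := (memK₀ v).1 hv
    have hvK := (memM v).1 hvM
    -- the out-neighbours of the non-sink `v` lie in `M`
    have hM2 : 2 ≤ M.card := by
      have hvS := hsink v hvK.1
      rw [memS] at hvS
      push Not at hvS
      obtain ⟨y, hy⟩ := hvS
      have hyK : y ∈ K := by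
        by_contra h
        exact hMI v hvM y h hy
      have hyM : y ∈ M := (memM y).2 ⟨hyK, fun h => hvK₁ y h hy⟩
      have hne : v ≠ y := fun h => hirr v (by rw [← h] at hy; exact hy)
      exact Finset.one_lt_card.2 ⟨v, hvM, y, hyM, hne⟩
    have hQ₁ : QuasiKernel A (insert v ((S ∪ I').filter (fun x => ¬ A x v))) := by
      refine quasiKernel_core (K₁ := K₁) hsplit hK₁K hvK.1 hvK.2 (hMI v hvM) hvK₁ ?_ ?_ hIrest
      · intro x hx
        rcases Finset.mem_union.1 hx with h | h
        · exact hSK x h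
        · exact ((memJ x).1 (hI'J h)).1
      · intro u huK huK₁ hu
        rcases hserf u ((memK₀ u).2 ⟨(memM u).2 ⟨huK, huK₁⟩, hu⟩) with h | h | ⟨x, -, h⟩
        · exact Or.inl h
        · exact Or.inr (Or.inl h)
        · exact Or.inr (Or.inr ⟨x, h⟩)
    have hc₁ : (insert v ((S ∪ I').filter (fun x => ¬ A x v))).card
        ≤ 1 + S.card + I'.card := by
      have h1 := Finset.card_insert_le v ((S ∪ I').filter (fun x => ¬ A x v))
      have h2 := Finset.card_filter_le (S ∪ I') (fun x => ¬ A x v)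
      have h3 := Finset.card_union_le S I'
      omega
    obtain ⟨Q, hQ, hQc⟩ := hking ⟨v, hvM⟩
    by_cases hle : 3 * Q.card + 2 * N₁.card ≤ 2 * (Fintype.card V + S.card)
    · exact ⟨Q, hQ, hle⟩
    · exact ⟨_, hQ₁, by omega⟩

/-- Every split digraph `D` has a quasi-kernel of size at most
`(2/3)·(|V(D)| + |S(D)| − |N⁻(S(D))|)`. -/
theorem stmt13 {V : Type*} [Fintype V] [DecidableEq V] (A : V → V → Prop) [DecidableRel A]
    (hirr : Irreflexive A) (K : Finset V) (hsplit : IsSplit A K) :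
    ∃ Q : Finset V, QuasiKernel A Q ∧
      (Q.card : ℝ) ≤ (2 / 3) *
        ((Fintype.card V : ℝ) + ((sinks A).card : ℝ) - ((inN A (sinks A)).card : ℝ)) := by
  obtain ⟨Q, hQ, hc⟩ := exists_quasiKernel_nat A hirr K hsplit
  refine ⟨Q, hQ, ?_⟩
  have hc' : (3 * Q.card + 2 * (inN A (sinks A)).card : ℝ) ≤
      2 * (Fintype.card V + (sinks A).card) := by exact_mod_cast hc
  linarith
end

section
/- Let D be a biorientation of a complete split graph with no quasi-kernel of size one. Let x be a vertex of D maximizing |N⁻(x) ∩ K(D)| over all vertices, and let L be the set of all vertices whose inneighborhood equals that of x (so x ∈ L). Then L ⊆ I(D). -/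
/-- In a biorientation of a complete split graph with no quasi-kernel of size one, if `x`
maximizes `|N⁻(x) ∩ K|`, then every vertex with the same inneighborhood as `x` lies in the
independent part. -/
theorem stmt14 {V : Type*} [Fintype V] [DecidableEq V] (A : V → V → Prop) [DecidableRel A]
    (hirr : Irreflexive A) (K : Finset V) (hcs : IsCompleteSplit A K)
    (hno1 : ∀ v : V, ¬ QuasiKernel A {v})
    (x : V) (hx : ∀ u : V, (K.filter (fun w => A w u)).card ≤ (K.filter (fun w => A w x)).card) :
    ∀ v : V, (∀ w : V, A w v ↔ A w x) → v ∉ K := by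
  intro v hv hvK
  obtain ⟨u, huv, h1, h2⟩ : ∃ u, u ≠ v ∧ ¬ A u v ∧ ∀ w, A u w → ¬ A w v := by
    by_contra! hcon
    refine hno1 v ⟨?_, fun u => ?_⟩
    · intro a ha b hb hab
      simp only [Finset.mem_singleton] at ha hb
      exact absurd (ha.trans hb.symm) hab
    · by_cases huv : u = v
      · exact Or.inl (by simp [huv])
      by_cases h1 : A u v
      · exact Or.inr (Or.inl ⟨v, by simp, h1⟩)
      obtain ⟨w, hw1, hw2⟩ := hcon u huv h1
      exact Or.inr (Or.inr ⟨w, v, by simp, hw1, hw2⟩)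
  have hadj : ∀ w ∈ K, w ≠ u → ¬ A u w → A w u := by
    intro w hw hwu hn
    by_cases huK : u ∈ K
    · exact (hcs.1.1 u huK w hw hwu.symm).resolve_left hn
    · exact (hcs.2 u huK w hw).resolve_left hn
  have hlt : (K.filter (fun w => A w x)).card < (K.filter (fun w => A w u)).card := by
    apply Finset.card_lt_card
    rw [Finset.ssubset_iff_of_subset]
    · refine ⟨v, ?_, ?_⟩
      · exact Finset.mem_filter.2 ⟨hvK, hadj v hvK huv.symm h1⟩
      · intro h
        exact hirr v ((hv v).2 (Finset.mem_filter.1 h).2)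
    · intro w hw
      obtain ⟨hwK, hwx⟩ := Finset.mem_filter.1 hw
      have hwv : A w v := (hv w).2 hwx
      refine Finset.mem_filter.2 ⟨hwK, hadj w hwK ?_ fun h => h2 w h hwv⟩
      rintro rfl
      exact h1 hwv
  exact absurd (hx u) (not_le.2 hlt)
end

section
/- Let D be a biorientation of a complete split graph with no quasi-kernel of size one. Let x be a vertex of D maximizing |N⁻(x) ∩ K(D)| over all vertices, and let L be the set of all vertices whose inneighborhood equals that of x (so x ∈ L). Then for every y ∈ L, the singleton {y} is a quasi-kernel of the induced subdigraph D[(V(D) ∖ L) ∪ {y}]. -/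
/-- `Q` is a quasi-kernel of the subdigraph induced by the vertex set `W`. -/
def QuasiKernelOn {V : Type*} (A : V → V → Prop) (W Q : Finset V) : Prop :=
  Q ⊆ W ∧ Indep A Q ∧
    ∀ v ∈ W, v ∈ Q ∨ (∃ q ∈ Q, A v q) ∨ (∃ w ∈ W, ∃ q ∈ Q, A v w ∧ A w q)

theorem inK_eq_of_not_reach {V : Type*} (A : V → V → Prop) [DecidableRel A]
    (K : Finset V) (hcs : IsCompleteSplit A K) (z s : V)
    (hz : ∀ u : V, (K.filter (fun w => A w u)).card ≤ (K.filter (fun w => A w z)).card)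
    (h1 : ¬ A s z) (h2 : ∀ w, A w z → ¬ A s w) :
    K.filter (fun w => A w z) = K.filter (fun w => A w s) := by
  refine Finset.eq_of_subset_of_card_le (fun k hk => ?_) (hz s)
  rw [Finset.mem_filter] at hk ⊢
  obtain ⟨hkK, hkz⟩ := hk
  refine ⟨hkK, ?_⟩
  have hks : s ≠ k := by
    rintro rfl
    exact h1 hkz
  by_cases hs : s ∈ K
  · exact (hcs.1.1 s hs k hkK hks).resolve_left (h2 k hkz)
  · exact (hcs.2 s hs k hkK).resolve_left (h2 k hkz)

/-- A maximal vertex of `K` would be a quasi-kernel of size one. -/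
theorem maximal_not_mem {V : Type*} (A : V → V → Prop) [DecidableRel A]
    (hirr : Irreflexive A) (K : Finset V) (hcs : IsCompleteSplit A K)
    (hno1 : ∀ v : V, ¬ QuasiKernel A {v}) (z : V)
    (hz : ∀ u : V, (K.filter (fun w => A w u)).card ≤ (K.filter (fun w => A w z)).card) :
    z ∉ K := by
  intro hzK
  refine hno1 z ⟨?_, fun s => ?_⟩
  · intro a ha b hb hab
    rw [Finset.mem_singleton] at ha hb
    exact absurd (ha.trans hb.symm) hab
  by_contra hcon
  simp only [Finset.mem_singleton, exists_eq_left, not_or, not_exists, not_and] at hcon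
  obtain ⟨hsz, h1, h2⟩ := hcon
  have heq := inK_eq_of_not_reach A K hcs z s hz h1 (fun w hw hsw => h2 w hsw hw)
  have hzs : A z s := by
    by_cases hs : s ∈ K
    · exact (hcs.1.1 s hs z hzK hsz).resolve_left h1
    · exact (hcs.2 s hs z hzK).resolve_left h1
  have hmem : z ∈ K.filter (fun w => A w z) := by
    rw [heq]
    exact Finset.mem_filter.2 ⟨hzK, hzs⟩
  exact hirr z (Finset.mem_filter.1 hmem).2

/-- In a biorientation of a complete split graph with no quasi-kernel of size one, if `x`
maximizes `|N⁻(x) ∩ K|` and `L` is the set of vertices with the same inneighborhood as `x`,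
then every `y ∈ L` forms a quasi-kernel of the subdigraph induced by `(V ∖ L) ∪ {y}`. -/
theorem stmt15 {V : Type*} [Fintype V] [DecidableEq V] (A : V → V → Prop) [DecidableRel A]
    (hirr : Irreflexive A) (K : Finset V) (hcs : IsCompleteSplit A K)
    (hno1 : ∀ v : V, ¬ QuasiKernel A {v})
    (x : V) (hx : ∀ u : V, (K.filter (fun w => A w u)).card ≤ (K.filter (fun w => A w x)).card) :
    ∀ y ∈ Finset.univ.filter (fun v : V => ∀ w : V, A w v ↔ A w x),
      QuasiKernelOn A
        ((Finset.univ \ Finset.univ.filter (fun v : V => ∀ w : V, A w v ↔ A w x)) ∪ {y})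
        {y} := by
  intro y hy
  have hyx : ∀ w, A w y ↔ A w x := (Finset.mem_filter.1 hy).2
  have hymax : ∀ u : V,
      (K.filter (fun w => A w u)).card ≤ (K.filter (fun w => A w y)).card := by
    simpa only [hyx] using hx
  refine ⟨Finset.subset_union_right, ?_, fun v hv => ?_⟩
  · intro a ha b hb hab
    rw [Finset.mem_singleton] at ha hb
    exact absurd (ha.trans hb.symm) hab
  by_contra hcon
  simp only [Finset.mem_singleton, exists_eq_left, not_or, not_exists, not_and] at hcon
  obtain ⟨hvy, h1, h2⟩ := hcon
  have hvL : ¬ ∀ w, A w v ↔ A w x := by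
    simpa [hvy] using hv
  have h2' : ∀ w, A w y → ¬ A v w := by
    intro w hw hvw
    refine h2 w ?_ hvw hw
    -- An inneighbor `w` of `y` in `L` would be its own inneighbor.
    have hwL : ¬ ∀ a, A a w ↔ A a x := fun h => hirr w ((h w).2 ((hyx w).1 hw))
    simp only [Finset.mem_union, Finset.mem_sdiff, Finset.mem_univ, Finset.mem_filter, true_and]
    exact Or.inl hwL
  have heq := inK_eq_of_not_reach A K hcs y v hymax h1 h2'
  have hyK := maximal_not_mem A hirr K hcs hno1 y hymax
  have hvK := maximal_not_mem A hirr K hcs hno1 v (by rw [← heq]; exact hymax)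
  -- Vertices outside `K` have all their inneighbors in `K`.
  have hin : ∀ z, z ∉ K → ∀ w, A w z → w ∈ K := by
    intro z hz w hwz
    by_contra hw
    refine hcs.1.2 w hw z hz ?_ hwz
    rintro rfl
    exact hirr w hwz
  refine hvL fun w => Iff.trans ?_ (hyx w)
  have hw := Finset.ext_iff.1 heq w
  rw [Finset.mem_filter, Finset.mem_filter] at hw
  exact ⟨fun h => (hw.2 ⟨hin v hvK w h, h⟩).2, fun h => (hw.1 ⟨hin y hyK w h, h⟩).2⟩
end

section
/- Let D be a split digraph with clique part K = K(D) and independent part I = I(D), let M be a maximal matching from K to I, let I_M be the set of vertices of I covered by M, let A = I_M ∪ N⁻(I_M) ∪ (N⁻⁻(I_M) ∩ I), and let B = V(D) ∖ A. Then there is no arc of D from a vertex of B ∩ K to a vertex of I. -/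
/-- In a split digraph with clique part `K` and independent part `I = Kᶜ`, given a maximal
matching `M` from `K` to `I`, with `I_M` the set of heads of `M` and
`A' = I_M ∪ N⁻(I_M) ∪ (N⁻⁻(I_M) ∩ I)` and `B = V ∖ A'`, there is no arc from `B ∩ K` to `I`. -/
theorem stmt16 {V : Type*} [Fintype V] [DecidableEq V] (A : V → V → Prop)
    (hirr : Irreflexive A) (K : Finset V) (hsplit : IsSplit A K)
    (M : Finset (V × V))
    (hM : ∀ e ∈ M, e.1 ∈ K ∧ e.2 ∉ K ∧ A e.1 e.2)
    (hdisj : ∀ e ∈ M, ∀ e' ∈ M, e ≠ e' →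
      e.1 ≠ e'.1 ∧ e.1 ≠ e'.2 ∧ e.2 ≠ e'.1 ∧ e.2 ≠ e'.2)
    (hmax : ∀ u ∈ K, ∀ v, v ∉ K → A u v →
      ∃ e ∈ M, u = e.1 ∨ u = e.2 ∨ v = e.1 ∨ v = e.2) :
    ∀ u ∈ K,
      u ∉ ((↑(M.image Prod.snd) ∪
            {z : V | z ∉ M.image Prod.snd ∧ ∃ s ∈ M.image Prod.snd, A z s} ∪
            ({z : V | z ∉ M.image Prod.snd ∧ ¬ (∃ s ∈ M.image Prod.snd, A z s) ∧
                ∃ w : V, ∃ s ∈ M.image Prod.snd, A z w ∧ A w s} ∩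
              {z : V | z ∉ K})) : Set V) →
      ∀ v, v ∉ K → ¬ A u v := by
  intro u hu hB v hv huv
  -- It suffices to exhibit an arc from `u` into `I_M`, since that puts `u` in `N⁻(I_M)`.
  have key : ∀ e ∈ M, ¬ A u e.2 := by
    intro e he hue
    refine hB (Or.inl (Or.inr ⟨fun h => ?_, e.2, Finset.mem_image_of_mem _ he, hue⟩))
    obtain ⟨f, hf, rfl⟩ := Finset.mem_image.1 h
    exact (hM f hf).2.1 hu
  obtain ⟨e, he, h | h | h | h⟩ := hmax u hu v hv huv
  · exact key e he (h ▸ (hM e he).2.2)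
  · exact (hM e he).2.1 (h ▸ hu)
  · exact hv (h ▸ (hM e he).1)
  · exact key e he (h ▸ huv)
end

section
/- Let D be a biorientation of a complete split graph and let v ∈ K(D) be a vertex such that |N⁻(v) ∩ K(D)| ≥ |N⁻(u) ∩ K(D)| for every vertex u of D. Then {v} is a quasi-kernel of D. -/
/-- In a biorientation of a complete split graph, a vertex of the clique part maximizing
the number of inneighbors in the clique part over all vertices forms a quasi-kernel. -/
theorem stmt17 {V : Type*} [Fintype V] [DecidableEq V] (A : V → V → Prop) [DecidableRel A]
    (hirr : Irreflexive A) (K : Finset V) (hcs : IsCompleteSplit A K)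
    (v : V) (hvK : v ∈ K)
    (hv : ∀ u : V, (K.filter (fun w => A w u)).card ≤ (K.filter (fun w => A w v)).card) :
    QuasiKernel A {v} := by
  have hadj : ∀ u, ∀ k ∈ K, u ≠ k → A u k ∨ A k u := by
    intro u k hk huk
    by_cases hu : u ∈ K
    · exact hcs.1.1 u hu k hk huk
    · exact hcs.2 u hu k hk
  have hvv : ¬ A v v := hirr v
  refine ⟨by simp [Indep], fun u => ?_⟩
  by_contra hcon
  simp only [Finset.mem_singleton, exists_eq_left, not_or, not_exists, not_and] at hcon
  obtain ⟨huv, hAuv, hpath⟩ := hcon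
  refine (hv u).not_gt (Finset.card_lt_card (Finset.ssubset_iff_of_subset ?_ |>.2
    ⟨v, by simpa [hvK] using (hadj u v hvK huv).resolve_left hAuv, by simp [hvv]⟩))
  intro w hw
  obtain ⟨hwK, hwv⟩ := Finset.mem_filter.1 hw
  have huw : u ≠ w := by rintro rfl; exact hAuv hwv
  exact Finset.mem_filter.2
    ⟨hwK, (hadj u w hwK huw).resolve_left fun h => hpath w h hwv⟩
end
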